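/- Let p and q6 be distinct odd prime numbers and let d1 be a positive odd integer. Then there is at most one pair of positive integers (x, y) satisfying d1·x^2 + 4·q6^2 = p^y. -/

import Mathlib

open Finset

theorem factorial_dvd_two_pow_mul_prod (u : ℤ) (j : ℕ) :
    (j.factorial : ℤ) ∣ 2 ^ j * ∏ l ∈ range j, (u - 4 * l) := by
  obtain ⟨v, o, ho, hj⟩ := Nat.exists_eq_two_pow_mul_odd (Nat.factorial_ne_zero j)
  have hv : v ≤ j := by
    rcases Nat.eq_zero_or_pos j with rfl | hj0
    · by_contra! h
      have : 2 ∣ Nat.factorial 0 := hj ▸ dvd_mul_of_dvd_left (dvd_pow_self 2 (by omega)) _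
      norm_num at this
    · have h1 := Nat.emultiplicity_two_factorial_lt hj0.ne'
      have h2 : (v : ℕ∞) ≤ emultiplicity 2 j.factorial :=
        pow_dvd_iff_le_emultiplicity.mp ⟨o, hj⟩
      exact_mod_cast (h2.trans_lt h1).le
  have hco : IsCoprime (4 : ℤ) (o : ℤ) := by
    have : Nat.Coprime (2 ^ 2) o := Nat.Coprime.pow_left 2 (Nat.coprime_two_left.mpr ho)
    exact_mod_cast (Nat.isCoprime_iff_coprime (m := 4) (n := o)).mpr this
  obtain ⟨c, s, hcs⟩ := hco
  have hod : (o : ℤ) ∣ ∏ l ∈ range j, (u - 4 * l) := by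
    have h1 : (o : ℤ) ∣ ∏ l ∈ range j, (-(c * u) + l) := by
      refine dvd_trans ?_ (Nat.factorial_coe_dvd_prod j (-(c * u)))
      exact_mod_cast Dvd.intro_left _ hj.symm
    have h2 : (∏ l ∈ range j, (u - 4 * (l : ℤ))) ≡
        ∏ l ∈ range j, (-4) * (-(c * u) + (l : ℤ)) [ZMOD o] := by
      refine Int.ModEq.prod fun l _ => ?_
      refine (Int.modEq_iff_dvd).mpr ⟨-(s * u), ?_⟩
      linear_combination u * hcs
    rw [prod_mul_distrib] at h2
    exact (Int.modEq_zero_iff_dvd.mp (h2.trans (Int.modEq_zero_iff_dvd.mpr (h1.mul_left _))))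
  rw [hj]
  push_cast
  exact mul_dvd_mul (pow_dvd_pow 2 hv) hod

/-- The integer `8 ^ j * binom (u / 4) j`. -/
def scaledChoose (u : ℤ) (j : ℕ) : ℤ := 2 ^ j * (∏ l ∈ range j, (u - 4 * l)) / j.factorial

theorem scaledChoose_mul_factorial (u : ℤ) (j : ℕ) :
    scaledChoose u j * j.factorial = 2 ^ j * ∏ l ∈ range j, (u - 4 * l) :=
  Int.ediv_mul_cancel (factorial_dvd_two_pow_mul_prod u j)

theorem scaledChoose_zero (u : ℤ) : scaledChoose u 0 = 1 := by simp [scaledChoose]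

theorem scaledChoose_succ (u : ℤ) (j : ℕ) :
    scaledChoose u (j + 1) * (j + 1) = 2 * (u - 4 * j) * scaledChoose u j := by
  have h1 := scaledChoose_mul_factorial u j
  have h2 := scaledChoose_mul_factorial u (j + 1)
  rw [prod_range_succ, Nat.factorial_succ] at h2
  push_cast at h2
  have h3 : (j.factorial : ℤ) ≠ 0 := by exact_mod_cast Nat.factorial_ne_zero j
  apply mul_right_cancel₀ h3
  linear_combination h2 - 2 * (u - 4 * j) * h1

/-- Coefficients `8 ^ k * binom (k - 1/4) i * binom (k + 1/4) j`, with `k = i + j`. -/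
def padeCoeff (ij : ℕ × ℕ) : ℤ :=
  scaledChoose (4 * (ij.1 + ij.2) - 1) ij.1 * scaledChoose (4 * (ij.1 + ij.2) + 1) ij.2

def padePoly {R : Type*} [CommRing R] (k : ℕ) (a b : R) : R :=
  ∑ ij ∈ antidiagonal k, (padeCoeff ij : R) * (a ^ ij.1 * b ^ ij.2)

/-- `1 / ((1 + ν) (2 + ν) ⋯ (n + ν) n!)`. -/
def besselCoeff (ν : ℚ) : ℕ → ℚ
  | 0 => 1
  | n + 1 => besselCoeff ν n / ((n + 1) * (n + 1 + ν))

def weightedSum {R : Type*} [CommRing R] [Algebra ℚ R] (ν : ℚ) (a b : R) (k : ℕ)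
    (w : ℚ → ℚ → ℚ) : R :=
  ∑ ij ∈ antidiagonal k,
    (w ij.1 ij.2 * besselCoeff ν ij.1 * besselCoeff (-ν) ij.2) • (a ^ ij.1 * b ^ ij.2)

section
variable {R : Type*} [CommRing R] [Algebra ℚ R] {ν : ℚ} (a b : R)

theorem left_mul_weightedSum (hν : ∀ n : ℕ, (n : ℚ) + 1 + ν ≠ 0) (k : ℕ) (w : ℚ → ℚ → ℚ) :
    a * weightedSum ν a b k w =
      weightedSum ν a b (k + 1) fun i j => i * (i + ν) * w (i - 1) j := by
  unfold weightedSum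
  rw [Finset.Nat.sum_antidiagonal_succ, mul_sum]
  simp only [Nat.cast_zero, zero_mul, zero_smul, zero_add]
  refine sum_congr rfl fun ij _ => ?_
  rw [mul_smul_comm, ← mul_assoc, ← pow_succ']
  congr 1
  have h1 : (ij.1 : ℚ) + 1 ≠ 0 := by positivity
  have h2 := hν ij.1
  simp only [besselCoeff]
  push_cast
  rw [add_sub_cancel_right]
  field_simp

theorem right_mul_weightedSum (hν : ∀ n : ℕ, (n : ℚ) + 1 - ν ≠ 0) (k : ℕ) (w : ℚ → ℚ → ℚ) :
    b * weightedSum ν a b k w =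
      weightedSum ν a b (k + 1) fun i j => j * (j - ν) * w i (j - 1) := by
  unfold weightedSum
  rw [Finset.Nat.sum_antidiagonal_succ', mul_sum]
  simp only [Nat.cast_zero, zero_mul, zero_smul, zero_add]
  refine sum_congr rfl fun ij _ => ?_
  rw [mul_smul_comm, mul_left_comm, ← pow_succ']
  congr 1
  have h1 : (ij.2 : ℚ) + 1 ≠ 0 := by positivity
  have h2 := hν ij.2
  simp only [besselCoeff, ← sub_eq_add_neg]
  push_cast
  rw [add_sub_cancel_right]
  field_simp

theorem weightedSum_congr {k : ℕ} {w w' : ℚ → ℚ → ℚ}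
    (h : ∀ i j : ℚ, i + j = k → w i j = w' i j) :
    weightedSum ν a b k w = weightedSum ν a b k w' := by
  refine sum_congr rfl fun ij hij => ?_
  rw [h]
  rw [HasAntidiagonal.mem_antidiagonal] at hij
  exact_mod_cast hij

theorem weightedSum_add (k : ℕ) (w w' : ℚ → ℚ → ℚ) :
    weightedSum ν a b k w + weightedSum ν a b k w' =
      weightedSum ν a b k fun i j => w i j + w' i j := by
  simp only [weightedSum, ← sum_add_distrib, ← add_smul, add_mul]

theorem smul_weightedSum (k : ℕ) (r : ℚ) (w : ℚ → ℚ → ℚ) :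
    r • weightedSum ν a b k w = weightedSum ν a b k fun i j => r * w i j := by
  simp only [weightedSum, smul_sum, smul_smul, mul_assoc]

theorem weightedSum_one_recurrence (hν : ∀ n : ℕ, (n : ℚ) + 1 + ν ≠ 0)
    (hν' : ∀ n : ℕ, (n : ℚ) + 1 - ν ≠ 0) (k : ℕ) :
    ((k + 1) * (k + 2) * ((k + 2) ^ 2 - ν ^ 2) : ℚ) • weightedSum ν a b (k + 2) (fun _ _ => 1) +
      (b - a) ^ 2 * weightedSum ν a b k (fun _ _ => 1) =
      ((k + 1) * (2 * k + 3) : ℚ) • ((a + b) * weightedSum ν a b (k + 1) (fun _ _ => 1)) := by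
  have e1 : (b - a) ^ 2 * weightedSum ν a b k (fun _ _ => 1) =
      b * (b * weightedSum ν a b k (fun _ _ => 1)) +
      (-2 : ℚ) • (a * (b * weightedSum ν a b k (fun _ _ => 1))) +
      a * (a * weightedSum ν a b k (fun _ _ => 1)) := by
    rw [neg_smul, show (2 : ℚ) = ((2 : ℕ) : ℚ) by norm_num, Nat.cast_smul_eq_nsmul, nsmul_eq_mul]
    push_cast
    ring
  rw [e1, add_mul a b]
  simp only [left_mul_weightedSum a b hν, right_mul_weightedSum a b hν', weightedSum_add,
    smul_weightedSum]
  apply weightedSum_congr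
  intro i j h
  push_cast at h
  obtain rfl : j = k + 2 - i := by linarith
  ring
end

theorem scaledChoose_eq (k i j : ℕ) (hk : k = i + j) (s : ℤ) (ν : ℚ) (hν : 4 * ν = s)
    (hν' : ∀ n : ℕ, (n : ℚ) + 1 + ν ≠ 0) :
    (scaledChoose (4 * k + s) j : ℚ) =
      8 ^ j * (∏ l ∈ range k, (l + 1 + ν)) * (besselCoeff ν i * i.factorial) / j.factorial := by
  have hb : besselCoeff ν i * i.factorial * ∏ l ∈ range i, ((l : ℚ) + 1 + ν) = 1 := by
    clear hk
    induction i with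
    | zero => simp [besselCoeff]
    | succ n ih =>
      rw [prod_range_succ, Nat.factorial_succ, besselCoeff]
      have h1 : (n : ℚ) + 1 ≠ 0 := by positivity
      have h2 := hν' n
      push_cast
      refine Eq.trans ?_ ih
      field_simp
  have hj : (j.factorial : ℚ) ≠ 0 := by exact_mod_cast Nat.factorial_ne_zero j
  rw [eq_div_iff hj]
  have h1 := congrArg (Int.cast (R := ℚ)) (scaledChoose_mul_factorial (4 * k + s) j)
  push_cast at h1
  rw [h1, ← hν, hk, prod_range_add]
  have h2 : ∏ l ∈ range j, (4 * ((i : ℚ) + j) + 4 * ν - 4 * l) =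
      4 ^ j * ∏ l ∈ range j, ((i : ℚ) + l + 1 + ν) := by
    rw [← prod_range_reflect, show (4 : ℚ) ^ j = ∏ _l ∈ range j, (4 : ℚ) from by simp,
      ← prod_mul_distrib]
    refine prod_congr rfl fun l hl => ?_
    have := mem_range.mp hl
    rw [Nat.sub_sub, Nat.cast_sub (by omega)]
    push_cast
    ring
  push_cast
  rw [h2, show (8 : ℚ) = 2 * 4 by norm_num, mul_pow]
  linear_combination (-(2 ^ j * 4 ^ j * ∏ l ∈ range j, ((i : ℚ) + l + 1 + ν))) * hb

theorem natCast_add_one_add_quarter_ne_zero (n : ℕ) : (n : ℚ) + 1 + 1 / 4 ≠ 0 := by positivity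

theorem natCast_add_one_sub_quarter_ne_zero (n : ℕ) : (n : ℚ) + 1 - 1 / 4 ≠ 0 := by
  have : (0 : ℚ) ≤ n := n.cast_nonneg
  linarith

theorem padePoly_eq_weightedSum {R : Type*} [CommRing R] [Algebra ℚ R] (k : ℕ) (a b : R) :
    padePoly k a b = (∏ l ∈ range k, (8 * (((l : ℚ) + 1) ^ 2 - (1 / 4) ^ 2))) •
      weightedSum (1 / 4) a b k fun _ _ => 1 := by
  unfold padePoly weightedSum
  rw [smul_sum]
  refine sum_congr rfl fun ij hij => ?_
  rw [HasAntidiagonal.mem_antidiagonal] at hij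
  rw [smul_smul, Algebra.smul_def, show (padeCoeff ij : R) = algebraMap ℚ R (padeCoeff ij) by simp]
  congr 2
  have h1 := scaledChoose_eq k ij.1 ij.2 hij.symm 1 (1 / 4) (by norm_num)
    natCast_add_one_add_quarter_ne_zero
  have h2 := scaledChoose_eq k ij.2 ij.1 (by omega) (-1) (-(1 / 4)) (by norm_num)
    fun n => by simpa only [← sub_eq_add_neg] using natCast_add_one_sub_quarter_ne_zero n
  unfold padeCoeff
  have hk : (ij.1 : ℤ) + ij.2 = k := by exact_mod_cast hij
  rw [hk, Int.cast_mul, sub_eq_add_neg, h1, h2]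
  have hi : (ij.1.factorial : ℚ) ≠ 0 := by exact_mod_cast Nat.factorial_ne_zero _
  have hj : (ij.2.factorial : ℚ) ≠ 0 := by exact_mod_cast Nat.factorial_ne_zero _
  have h3 : ∏ l ∈ range k, (8 * (((l : ℚ) + 1) ^ 2 - (1 / 4) ^ 2)) =
      8 ^ k * ((∏ l ∈ range k, ((l : ℚ) + 1 + 1 / 4)) *
        ∏ l ∈ range k, ((l : ℚ) + 1 + -(1 / 4))) := by
    rw [← prod_mul_distrib, show (8 : ℚ) ^ k = ∏ _l ∈ range k, (8 : ℚ) from by simp,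
      ← prod_mul_distrib]
    exact prod_congr rfl fun l _ => by ring
  rw [h3, show (8 : ℚ) ^ k = 8 ^ ij.1 * 8 ^ ij.2 by rw [← pow_add, hij]]
  generalize ∏ l ∈ range k, ((l : ℚ) + 1 + 1 / 4) = u
  generalize ∏ l ∈ range k, ((l : ℚ) + 1 + -(1 / 4)) = v
  field_simp

theorem padePoly_zero {R : Type*} [CommRing R] (a b : R) : padePoly 0 a b = 1 := by
  simp [padePoly, padeCoeff, scaledChoose_zero]

theorem padePoly_one {R : Type*} [CommRing R] (a b : R) : padePoly 1 a b = 6 * a + 10 * b := by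
  have h : ∀ u, scaledChoose u 1 = 2 * u := fun u => by
    have := scaledChoose_succ u 0
    simpa [scaledChoose_zero] using this
  simp [padePoly, padeCoeff, Finset.Nat.antidiagonal_succ, scaledChoose_zero, h]
  ring

theorem padePoly_recurrence {R : Type*} [CommRing R] [Algebra ℚ R] (k : ℕ) (a b : R) :
    ((k : R) + 1) * (k + 2) * padePoly (k + 2) a b =
      8 * (k + 1) * (2 * k + 3) * (a + b) * padePoly (k + 1) a b -
        (64 * (k + 1) ^ 2 - 4) * (b - a) ^ 2 * padePoly k a b := by
  have h := weightedSum_one_recurrence (ν := 1 / 4) a b natCast_add_one_add_quarter_ne_zero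
    natCast_add_one_sub_quarter_ne_zero k
  rw [padePoly_eq_weightedSum, padePoly_eq_weightedSum, padePoly_eq_weightedSum,
    prod_range_succ, prod_range_succ]
  set S2 : R := weightedSum (1 / 4) a b (k + 2) fun _ _ => 1
  set S1 : R := weightedSum (1 / 4) a b (k + 1) fun _ _ => 1
  set S0 : R := weightedSum (1 / 4) a b k fun _ _ => 1
  set c := ∏ l ∈ range k, (8 * (((l : ℚ) + 1) ^ 2 - (1 / 4) ^ 2))
  simp only [Algebra.smul_def] at h ⊢
  have h4 : (algebraMap ℚ R (1 / 4)) * 4 = 1 := by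
    rw [← map_ofNat (algebraMap ℚ R) 4, ← map_mul]
    norm_num
  simp only [map_mul, map_sub, map_pow, map_add, map_natCast, map_one, map_ofNat] at h ⊢
  push_cast
  set f := algebraMap ℚ R (1 / 4)
  set c' := algebraMap ℚ R c
  linear_combination (64 * c' * (((k : R) + 1) ^ 2 - f ^ 2)) * h +
    (4 * c' * (b - a) ^ 2 * S0) * (4 * f + 1) * h4

theorem derivation_padePoly {R : Type*} [CommRing R] [IsDomain R] [Algebra ℚ R]
    (D : Derivation ℚ R R) (a b : R) (k : ℕ) :
    4 * ((k : R) + 1) * ((b - a) ^ 2 - (a + b) ^ 2) * D (padePoly (k + 1) a b) =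
      (((b - a) - 4 * (k + 1) * (a + b)) * (k + 1) * padePoly (k + 1) a b +
        2 * (16 * (k + 1) ^ 2 - 1) * (b - a) ^ 2 * padePoly k a b) * D (a + b) +
      ((4 * (k + 1) * (b - a) - (a + b)) * (k + 1) * padePoly (k + 1) a b -
        2 * (16 * (k + 1) ^ 2 - 1) * (a + b) * (b - a) * padePoly k a b) * D (b - a) := by
  have : CharZero R := algebraRat.charZero R
  have hD : ∀ n : ℕ, D (n : R) = 0 := fun n => D.map_natCast n
  have hD' : ∀ n : ℕ, [n.AtLeastTwo] → D (OfNat.ofNat n : R) = 0 := fun n _ => D.map_natCast n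
  have hrec : ∀ n : ℕ, ((n : R) + 1) * (n + 2) * D (padePoly (n + 2) a b) =
      8 * (n + 1) * (2 * n + 3) * (D (a + b) * padePoly (n + 1) a b +
        (a + b) * D (padePoly (n + 1) a b)) -
        (64 * (n + 1) ^ 2 - 4) * (2 * (b - a) * D (b - a) * padePoly n a b +
          (b - a) ^ 2 * D (padePoly n a b)) := by
    intro n
    have h := congrArg D (padePoly_recurrence n a b)
    have e1 : D (((n : R) + 1) * (n + 2) * padePoly (n + 2) a b) =
        ((n : R) + 1) * (n + 2) * D (padePoly (n + 2) a b) := by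
      simp [hD, hD', Derivation.leibniz]
    have e2 : D (8 * ((n : R) + 1) * (2 * n + 3) * (a + b) * padePoly (n + 1) a b -
        (64 * (n + 1) ^ 2 - 4) * (b - a) ^ 2 * padePoly n a b) =
        8 * (n + 1) * (2 * n + 3) * (D (a + b) * padePoly (n + 1) a b +
        (a + b) * D (padePoly (n + 1) a b)) -
        (64 * (n + 1) ^ 2 - 4) * (2 * (b - a) * D (b - a) * padePoly n a b +
          (b - a) ^ 2 * D (padePoly n a b)) := by
      simp [hD, hD', Derivation.leibniz, Derivation.leibniz_pow]
      ring
    rw [e1, e2] at h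
    exact h
  have hP1 : padePoly 1 a b = 8 * (a + b) + 2 * (b - a) := by rw [padePoly_one]; ring
  have hDP1 : D (padePoly 1 a b) = 8 * D (a + b) + 2 * D (b - a) := by
    rw [hP1]
    simp [hD', Derivation.leibniz]
  have hDP0 : D (padePoly 0 a b) = 0 := by rw [padePoly_zero]; simp
  have hr := fun n => padePoly_recurrence n a b
  generalize hs : a + b = s at *
  generalize hd : b - a = d at *
  induction k using Nat.twoStepInduction with
  | zero =>
    simp only [zero_add, hDP1]
    simp only [hP1, padePoly_zero]
    push_cast
    ring
  | one =>
    have h1 := hrec 0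
    have h2 := hr 0
    simp only [Nat.cast_zero, zero_add, hDP1, hDP0] at h1 h2
    simp only [hP1, padePoly_zero] at h1 h2
    simp only [Nat.cast_one, hP1]
    norm_num at h1 h2 ⊢
    linear_combination 4 * (d ^ 2 - s ^ 2) * h1 - 1 * ((d - 8 * s) * D s + (8 * d - s) * D d) * h2
  | more n ih1 ih2 =>
    have h1 := hrec (n + 1)
    have h2 := hr (n + 1)
    have h3 := hr n
    push_cast at ih1 ih2 h1 h2 h3 ⊢
    have hk1 : ((n : R) + 1) * (n + 1 + 1) ≠ 0 :=
      mul_ne_zero (by exact_mod_cast Nat.succ_ne_zero n)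
        (by exact_mod_cast Nat.succ_ne_zero (n + 1))
    apply mul_left_cancel₀ hk1
    linear_combination 4 * ((n : R) + 1) * (d ^ 2 - s ^ 2) * h1 +
      8 * ((n : R) + 1) * (2 * n + 5) * s * ih2 - (64 * ((n : R) + 2) ^ 2 - 4) * d ^ 2 * ih1 -
      ((n : R) + 1) * ((d - 4 * (n + 3) * s) * D s + (4 * (n + 3) * d - s) * D d) * h2 -
      (32 * ((n : R) + 2) ^ 2 - 2) * d * (d * D s - s * D d) * h3

open Polynomial in
/-- `padePoly` as a function of the ratio `(a + b) / (b - a)`. -/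
noncomputable def padeX (k : ℕ) : ℝ[X] := padePoly k (X - 1) (X + 1)

open Polynomial in
theorem padeX_recurrence (k : ℕ) :
    ((k : ℝ[X]) + 1) * ((k : ℝ[X]) + 2) * padeX (k + 2) =
      16 * ((k : ℝ[X]) + 1) * (2 * (k : ℝ[X]) + 3) * X * padeX (k + 1) -
        16 * (16 * ((k : ℝ[X]) + 1) ^ 2 - 1) * padeX k := by
  unfold padeX
  linear_combination padePoly_recurrence k (X - 1 : ℝ[X]) (X + 1)

open Polynomial in
theorem padeX_derivative (k : ℕ) :
    4 * ((k : ℝ[X]) + 1) * (1 - X ^ 2) * derivative (padeX (k + 1)) =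
      (1 - 4 * ((k : ℝ[X]) + 1) * X) * ((k : ℝ[X]) + 1) * padeX (k + 1) +
        4 * (16 * ((k : ℝ[X]) + 1) ^ 2 - 1) * padeX k := by
  have h := derivation_padePoly ((Polynomial.derivative' (R := ℝ)).restrictScalars ℚ)
    (X - 1 : ℝ[X]) (X + 1) k
  have h4 : (4 : ℝ[X]) ≠ 0 := by norm_num
  apply mul_left_cancel₀ h4
  simp only [Derivation.restrictScalars_apply, derivative'_apply] at h
  have e1 : derivative (X - 1 + (X + 1) : ℝ[X]) = 2 := by
    simp
    norm_num
  have e2 : derivative (X + 1 - (X - 1) : ℝ[X]) = 0 := by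
    simp
  rw [e1, e2] at h
  unfold padeX
  linear_combination h

open Polynomial in
theorem padeX_derivative' (k : ℕ) :
    16 * (1 - X ^ 2) * derivative (padeX k) =
      (4 + 16 * ((k : ℝ[X]) + 1) * X) * padeX k - ((k : ℝ[X]) + 1) * padeX (k + 1) := by
  cases k with
  | zero =>
    simp only [padeX, padePoly_zero, padePoly_one, zero_add, Nat.cast_zero, derivative_one]
    ring
  | succ n =>
    have h1 := padeX_derivative n
    have h2 := padeX_recurrence n
    have h : (n : ℝ[X]) + 1 ≠ 0 := by exact_mod_cast Nat.succ_ne_zero n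
    apply mul_left_cancel₀ h
    push_cast
    linear_combination 4 * h1 + h2

open Polynomial in
theorem padeX_ode (k : ℕ) :
    2 * (1 - X ^ 2) * derivative (derivative (padeX (k + 1))) =
      (4 * X + 1) * derivative (padeX (k + 1)) -
        2 * ((k : ℝ[X]) + 1) * ((k : ℝ[X]) + 2) * padeX (k + 1) := by
  have h1 := padeX_derivative k
  have h2 := padeX_derivative' k
  have h3 := congrArg derivative h1
  have e1 : derivative (4 * ((k : ℝ[X]) + 1) * (1 - X ^ 2) * derivative (padeX (k + 1))) =
      4 * ((k : ℝ[X]) + 1) * (-2 * X * derivative (padeX (k + 1)) +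
        (1 - X ^ 2) * derivative (derivative (padeX (k + 1)))) := by
    simp only [derivative_mul, derivative_pow, derivative_add, derivative_sub, derivative_one,
      derivative_X, derivative_natCast, derivative_ofNat, map_natCast]
    push_cast
    ring
  have e2 : derivative ((1 - 4 * ((k : ℝ[X]) + 1) * X) * ((k : ℝ[X]) + 1) * padeX (k + 1) +
      4 * (16 * ((k : ℝ[X]) + 1) ^ 2 - 1) * padeX k) =
      -4 * ((k : ℝ[X]) + 1) ^ 2 * padeX (k + 1) +
        (1 - 4 * ((k : ℝ[X]) + 1) * X) * ((k : ℝ[X]) + 1) * derivative (padeX (k + 1)) +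
        4 * (16 * ((k : ℝ[X]) + 1) ^ 2 - 1) * derivative (padeX k) := by
    simp only [derivative_mul, derivative_pow, derivative_add, derivative_sub, derivative_one,
      derivative_X, derivative_natCast, derivative_ofNat, map_natCast]
    push_cast
    ring
  rw [e1, e2] at h3
  have h : 8 * ((k : ℝ[X]) + 1) * (1 - X ^ 2) ≠ 0 := by
    refine mul_ne_zero (mul_ne_zero (by norm_num) (by exact_mod_cast Nat.succ_ne_zero k)) ?_
    intro h0
    have := congrArg (eval 0) h0
    simp at this
  apply mul_left_cancel₀ h
  linear_combination 4 * (1 - X ^ 2) * h3 + (16 * ((k : ℝ[X]) + 1) ^ 2 - 1) * h2 -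
    (1 + 4 * ((k : ℝ[X]) + 1) * X) * h1

open Polynomial in
theorem padeX_eval_one_succ (k : ℕ) :
    ((k : ℝ) + 1) * (padeX (k + 1)).eval 1 = 4 * (4 * k + 5) * (padeX k).eval 1 := by
  have h := congrArg (eval 1) (padeX_derivative k)
  simp at h
  have h4 : (4 * (k : ℝ) + 3) ≠ 0 := by positivity
  apply mul_left_cancel₀ h4
  linear_combination h

open Polynomial in
theorem padeX_eval_neg_one_succ (k : ℕ) :
    ((k : ℝ) + 1) * (padeX (k + 1)).eval (-1) = -4 * (4 * k + 3) * (padeX k).eval (-1) := by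
  have h := congrArg (eval (-1)) (padeX_derivative k)
  simp at h
  have h4 : (4 * (k : ℝ) + 5) ≠ 0 := by positivity
  apply mul_left_cancel₀ h4
  linear_combination -h

open Polynomial in
theorem padeX_eval_one_pos (k : ℕ) : 0 < (padeX k).eval 1 := by
  induction k with
  | zero => simp [padeX, padePoly_zero]
  | succ k ih =>
    have h := padeX_eval_one_succ k
    have h1 : 0 < ((k : ℝ) + 1) * (padeX (k + 1)).eval 1 := by rw [h]; positivity
    exact pos_of_mul_pos_right h1 (by positivity)

open Polynomial in
theorem abs_padeX_eval_neg_one_le (k : ℕ) : |(padeX k).eval (-1)| ≤ (padeX k).eval 1 := by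
  induction k with
  | zero => simp [padeX, padePoly_zero]
  | succ k ih =>
    have h := padeX_eval_one_succ k
    have h' := congrArg abs (padeX_eval_neg_one_succ k)
    rw [abs_mul, abs_mul, abs_mul, abs_neg, abs_of_nonneg (by positivity : (0 : ℝ) ≤ (k : ℝ) + 1),
      abs_of_nonneg (by positivity : (0 : ℝ) ≤ 4),
      abs_of_nonneg (by positivity : (0 : ℝ) ≤ 4 * (k : ℝ) + 3)] at h'
    have hp := padeX_eval_one_pos k
    refine le_of_mul_le_mul_left (a := (k : ℝ) + 1) ?_ (by positivity)
    rw [h, h']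
    gcongr
    norm_num

open Polynomial in
theorem abs_padeX_eval_le (k : ℕ) {x : ℝ} (hx : |x| ≤ 1) :
    |(padeX k).eval x| ≤ (padeX k).eval 1 := by
  obtain ⟨hx1, hx2⟩ := abs_le.mp hx
  cases k with
  | zero => simp [padeX, padePoly_zero]
  | succ k =>
  set Q : ℝ[X] := padeX (k + 1) with hQ
  set c : ℝ := ((k : ℝ) + 1) * (k + 2) with hc
  have hc0 : 0 < c := by positivity
  set F : ℝ[X] := C c * Q ^ 2 + (1 - X ^ 2) * derivative Q ^ 2 with hF
  have hF' : derivative F = (2 * X + 1) * derivative Q ^ 2 := by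
    have h := padeX_ode k
    rw [← hQ] at h
    have hC : C c = ((k : ℝ[X]) + 1) * ((k : ℝ[X]) + 2) := by
      simp only [hc, map_mul, map_add, map_natCast, map_one, map_ofNat]
    rw [hF, hC]
    simp only [derivative_mul, derivative_pow, derivative_add, derivative_sub, derivative_one,
      derivative_X, derivative_natCast, derivative_ofNat, map_natCast]
    push_cast
    linear_combination derivative Q * h
  have hderiv : ∀ y : ℝ, deriv (fun z => F.eval z) y = (2 * y + 1) * (derivative Q).eval y ^ 2 := by
    intro y
    rw [Polynomial.deriv, hF']
    simp
  have hle : F.eval x ≤ c * Q.eval 1 ^ 2 := by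
    have hneg : Q.eval (-1) ^ 2 ≤ Q.eval 1 ^ 2 := by
      rw [sq_le_sq, abs_of_pos (padeX_eval_one_pos (k + 1))]
      exact abs_padeX_eval_neg_one_le (k + 1)
    rcases le_total x (-1 / 2) with h | h
    · have hanti : AntitoneOn (fun z => F.eval z) (Set.Icc (-1) (-1 / 2)) := by
        apply antitoneOn_of_deriv_nonpos (convex_Icc _ _) F.continuous.continuousOn
          F.differentiable.differentiableOn
        intro y hy
        rw [interior_Icc, Set.mem_Ioo] at hy
        rw [hderiv]
        exact mul_nonpos_of_nonpos_of_nonneg (by linarith) (sq_nonneg _)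
      have := hanti (show (-1 : ℝ) ∈ Set.Icc (-1) (-1 / 2) by norm_num) ⟨hx1, h⟩ hx1
      refine this.trans ?_
      simp only [hF, eval_add, eval_mul, eval_C, eval_pow, eval_sub, eval_one, eval_X]
      nlinarith
    · have hmono : MonotoneOn (fun z => F.eval z) (Set.Icc (-1 / 2) 1) := by
        apply monotoneOn_of_deriv_nonneg (convex_Icc _ _) F.continuous.continuousOn
          F.differentiable.differentiableOn
        intro y hy
        rw [interior_Icc, Set.mem_Ioo] at hy
        rw [hderiv]
        exact mul_nonneg (by linarith) (sq_nonneg _)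
      have := hmono ⟨h, hx2⟩ (show (1 : ℝ) ∈ Set.Icc (-1 / 2) 1 by norm_num) hx2
      refine this.trans ?_
      simp only [hF, eval_add, eval_mul, eval_C, eval_pow, eval_sub, eval_one, eval_X]
      nlinarith
  have hge : c * Q.eval x ^ 2 ≤ F.eval x := by
    simp only [hF, eval_add, eval_mul, eval_C, eval_pow, eval_sub, eval_one, eval_X]
    have : 0 ≤ (1 - x ^ 2) * (derivative Q).eval x ^ 2 :=
      mul_nonneg (by nlinarith) (sq_nonneg _)
    linarith
  have hsq : Q.eval x ^ 2 ≤ Q.eval 1 ^ 2 := le_of_mul_le_mul_left (hge.trans hle) hc0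
  have := sq_le_sq.mp hsq
  rwa [abs_of_pos (padeX_eval_one_pos (k + 1))] at this

theorem map_padePoly {R S : Type*} [CommRing R] [CommRing S] (f : R →+* S) (k : ℕ) (a b : R) :
    f (padePoly k a b) = padePoly k (f a) (f b) := by
  simp [padePoly]

theorem padePoly_mul_mul {R : Type*} [CommRing R] (k : ℕ) (c a b : R) :
    padePoly k (c * a) (c * b) = c ^ k * padePoly k a b := by
  unfold padePoly
  rw [mul_sum]
  refine sum_congr rfl fun ij hij => ?_
  rw [← HasAntidiagonal.mem_antidiagonal.mp hij, pow_add, mul_pow, mul_pow]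
  ring

theorem eval_padeX (k : ℕ) (x : ℝ) : (padeX k).eval x = padePoly k (x - 1) (x + 1) := by
  unfold padeX
  rw [← Polynomial.coe_evalRingHom, map_padePoly]
  simp

theorem abs_padePoly_le (k : ℕ) {a b : ℝ} (h : a ≠ b) (hab : |a + b| ≤ |b - a|) :
    |padePoly k a b| ≤ (|b - a| / 2) ^ k * (padeX k).eval 1 := by
  have h0 : b - a ≠ 0 := sub_ne_zero.mpr h.symm
  set x := (a + b) / (b - a) with hx
  have hx1 : |x| ≤ 1 := by
    rw [hx, abs_div]
    exact div_le_one_of_le₀ hab (abs_nonneg _)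
  have e : padePoly k a b = ((b - a) / 2) ^ k * (padeX k).eval x := by
    rw [eval_padeX, ← padePoly_mul_mul]
    congr 1 <;> rw [hx] <;> field_simp <;> ring
  rw [e, abs_mul, abs_pow, abs_div, abs_two]
  gcongr
  exact abs_padeX_eval_le k hx1

open PowerSeries in
/-- The binomial series of `(1 + 8 c X) ^ (1 / 4)`, with `c ^ n` collected in the coefficients. -/
noncomputable def quarticRootSeries (c : ℤ) : ℚ⟦X⟧ :=
  PowerSeries.mk fun n => ((c ^ n * scaledChoose 1 n : ℤ) : ℚ)

open PowerSeries in
theorem coeff_X_mul_derivative (f : ℚ⟦X⟧) (n : ℕ) :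
    coeff n (X * d⁄dX ℚ f) = n * coeff n f := by
  cases n with
  | zero => simp
  | succ n =>
    rw [coeff_succ_X_mul, coeff_derivative]
    push_cast
    ring

open PowerSeries in
theorem derivative_quarticRootSeries (c : ℤ) :
    (1 + 8 * (c : ℚ⟦X⟧) * X) * d⁄dX ℚ (quarticRootSeries c) =
      2 * (c : ℚ⟦X⟧) * quarticRootSeries c := by
  have h : d⁄dX ℚ (quarticRootSeries c) + C (8 * (c : ℚ)) * (X * d⁄dX ℚ (quarticRootSeries c)) =
      C (2 * (c : ℚ)) * quarticRootSeries c := by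
    ext n
    rw [map_add, coeff_C_mul, coeff_C_mul, coeff_X_mul_derivative, coeff_derivative]
    have h := scaledChoose_succ 1 n
    simp only [quarticRootSeries, coeff_mk]
    have h' : ((scaledChoose 1 (n + 1) * (n + 1) : ℤ) : ℚ) =
      (2 * (1 - 4 * n) * scaledChoose 1 n : ℤ) := by exact_mod_cast congrArg (Int.cast (R := ℚ)) h
    push_cast at h' ⊢
    linear_combination (c : ℚ) ^ (n + 1) * h'
  simp only [map_mul, map_ofNat, map_intCast] at h
  linear_combination h

open PowerSeries in
theorem quarticRootSeries_pow_four (c : ℤ) :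
    quarticRootSeries c ^ 4 = 1 + 8 * (c : ℚ⟦X⟧) * X := by
  have h : d⁄dX ℚ (quarticRootSeries c ^ 4) +
      C (8 * (c : ℚ)) * (X * d⁄dX ℚ (quarticRootSeries c ^ 4)) =
      C (8 * (c : ℚ)) * quarticRootSeries c ^ 4 := by
    simp only [map_mul, map_ofNat, map_intCast, Derivation.leibniz_pow, smul_eq_mul, nsmul_eq_mul]
    push_cast
    linear_combination 4 * quarticRootSeries c ^ 3 * derivative_quarticRootSeries c
  have hc : ∀ n : ℕ, coeff (n + 1) (quarticRootSeries c ^ 4) * ((n : ℚ) + 1) =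
      8 * (c : ℚ) * (1 - (n : ℚ)) * coeff n (quarticRootSeries c ^ 4) := by
    intro n
    have := congrArg (coeff n) h
    rw [map_add, coeff_C_mul, coeff_C_mul, coeff_X_mul_derivative, coeff_derivative] at this
    linear_combination this
  have h0 : coeff 0 (quarticRootSeries c ^ 4) = 1 := by
    simp [quarticRootSeries, scaledChoose_zero]
  have h1 : coeff 1 (quarticRootSeries c ^ 4) = 8 * (c : ℚ) := by
    simpa [h0] using hc 0
  have h2 : ∀ n : ℕ, coeff (n + 2) (quarticRootSeries c ^ 4) = 0 := by
    intro n
    induction n with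
    | zero =>
      have := hc 1
      norm_num at this
      exact this
    | succ n ih =>
      have := hc (n + 2)
      rw [ih, mul_zero] at this
      exact (mul_eq_zero.mp this).resolve_right (by positivity)
  have e : (1 + 8 * (c : ℚ⟦X⟧) * X) = 1 + C (8 * (c : ℚ)) * X := by
    simp only [map_mul, map_ofNat, map_intCast]
  rw [e]
  ext n
  match n with
  | 0 => rw [h0]; simp
  | 1 => rw [h1, map_add, coeff_C_mul, coeff_one_X]; simp [coeff_one]
  | n + 2 => rw [h2, map_add, coeff_C_mul, coeff_X, coeff_one]; simp

open PowerSeries in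
theorem derivative_padePoly_mul_quarticRootSeries (k : ℕ) (c : ℤ) (hc : c ^ 2 = 1) :
    ((k : ℚ⟦X⟧) + 1) * (64 * X ^ 2 - 1) * d⁄dX ℚ
      (padePoly (k + 1) (1 - 8 * (c : ℚ⟦X⟧) * X) (1 + 8 * (c : ℚ⟦X⟧) * X) *
        quarticRootSeries (-c)) =
      16 * (4 * (k : ℚ⟦X⟧) + 5) * X *
      (((k : ℚ⟦X⟧) + 1) * (padePoly (k + 1) (1 - 8 * (c : ℚ⟦X⟧) * X) (1 + 8 * (c : ℚ⟦X⟧) * X) *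
        quarticRootSeries (-c)) - 4 * (4 * (k : ℚ⟦X⟧) + 3) *
      (padePoly k (1 - 8 * (c : ℚ⟦X⟧) * X) (1 + 8 * (c : ℚ⟦X⟧) * X) *
        quarticRootSeries (-c))) := by
  have h1 := derivation_padePoly (d⁄dX ℚ) (1 - 8 * (c : ℚ⟦X⟧) * X) (1 + 8 * (c : ℚ⟦X⟧) * X) k
  have h2 := derivative_quarticRootSeries (-c)
  have hc' : (c : ℚ⟦X⟧) ^ 2 = 1 := by rw [← Int.cast_pow, hc, Int.cast_one]
  have e1 : d⁄dX ℚ (1 - 8 * (c : ℚ⟦X⟧) * X + (1 + 8 * (c : ℚ⟦X⟧) * X)) = 0 := by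
    have : (1 - 8 * (c : ℚ⟦X⟧) * X + (1 + 8 * (c : ℚ⟦X⟧) * X)) = ((2 : ℕ) : ℚ⟦X⟧) := by
      push_cast; ring
    rw [this, Derivation.map_natCast]
  have e2 : d⁄dX ℚ (1 + 8 * (c : ℚ⟦X⟧) * X - (1 - 8 * (c : ℚ⟦X⟧) * X)) = 16 * c := by
    have : (1 + 8 * (c : ℚ⟦X⟧) * X - (1 - 8 * (c : ℚ⟦X⟧) * X)) = (16 * c : ℤ) • X := by
      rw [zsmul_eq_mul]
      push_cast; ring
    rw [this, map_zsmul, derivative_X, zsmul_eq_mul]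
    push_cast
    ring
  rw [e1, e2] at h1
  rw [Derivation.leibniz, smul_eq_mul, smul_eq_mul]
  generalize d⁄dX ℚ (quarticRootSeries (-c)) = dT at *
  generalize d⁄dX ℚ (padePoly (k + 1) (1 - 8 * (c : ℚ⟦X⟧) * X) (1 + 8 * (c : ℚ⟦X⟧) * X)) = dP at *
  generalize (quarticRootSeries (-c)) = T at *
  generalize (padePoly (k + 1) (1 - 8 * (c : ℚ⟦X⟧) * X) (1 + 8 * (c : ℚ⟦X⟧) * X)) = P1 at *
  generalize (padePoly k (1 - 8 * (c : ℚ⟦X⟧) * X) (1 + 8 * (c : ℚ⟦X⟧) * X)) = P0 at *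
  push_cast at h2
  generalize (c : ℚ⟦X⟧) = c at *
  have : CharZero ℚ⟦X⟧ := algebraRat.charZero _
  have h16 : (16 : ℚ⟦X⟧) ≠ 0 := by
    exact_mod_cast (Nat.cast_ne_zero (R := ℚ⟦X⟧)).mpr (show 16 ≠ 0 by norm_num)
  apply mul_left_cancel₀ h16
  have hX : (X : ℚ⟦X⟧) ^ 2 * c ^ 2 = X ^ 2 := by rw [hc', mul_one]
  have h1' : 16 * ((k : ℚ⟦X⟧) + 1) * (64 * X ^ 2 - 1) * dP =
      16 * ((64 * ((k : ℚ⟦X⟧) + 1) * X - 2 * c) * ((k : ℚ⟦X⟧) + 1) * P1 -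
        64 * (16 * ((k : ℚ⟦X⟧) + 1) ^ 2 - 1) * X * P0) := by
    linear_combination h1 + (-1024 * ((k : ℚ⟦X⟧) + 1) * dP * X ^ 2 +
      1024 * ((k : ℚ⟦X⟧) + 1) ^ 2 * X * P1 -
      1024 * (16 * ((k : ℚ⟦X⟧) + 1) ^ 2 - 1) * X * P0) * hc'
  have h2' : (64 * X ^ 2 - 1) * dT = (2 * c + 16 * X) * T := by
    linear_combination -(1 + 8 * c * X) * h2 + (-64 * X ^ 2 * dT + 16 * X * T) * hc'
  linear_combination T * h1' + 16 * ((k : ℚ⟦X⟧) + 1) * P1 * h2'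

open PowerSeries in
theorem X_pow_dvd_padePoly_mul_sub (k : ℕ) :
    (X : ℚ⟦X⟧) ^ (2 * k + 1) ∣
      padePoly k (1 - 8 * X) (1 + 8 * X) * quarticRootSeries (-1) -
      padePoly k (1 + 8 * X) (1 - 8 * X) * quarticRootSeries 1 := by
  induction k with
  | zero =>
    rw [X_pow_dvd_iff]
    intro m hm
    obtain rfl : m = 0 := by omega
    simp [padePoly_zero, quarticRootSeries, scaledChoose_zero]
  | succ k ih =>
    have h1 := derivative_padePoly_mul_quarticRootSeries k 1 (by norm_num)
    have h2 := derivative_padePoly_mul_quarticRootSeries k (-1) (by norm_num)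
    simp only [Int.cast_neg, Int.cast_one, mul_one, mul_neg, neg_neg, neg_mul, sub_neg_eq_add,
      ← sub_eq_add_neg] at h1 h2
    have h0 : coeff 0 (padePoly (k + 1) (1 - 8 * X) (1 + 8 * X) * quarticRootSeries (-1) -
        padePoly (k + 1) (1 + 8 * X) (1 - 8 * X) * quarticRootSeries 1) = 0 := by
      simp only [coeff_zero_eq_constantCoeff_apply, map_sub, map_mul, map_padePoly, map_one,
        map_add, constantCoeff_X, mul_zero, sub_zero, add_zero]
      simp [quarticRootSeries, scaledChoose_zero, ← coeff_zero_eq_constantCoeff_apply]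
    have h : C ((k : ℚ) + 1) * (C 64 * (X * (X * d⁄dX ℚ
        (padePoly (k + 1) (1 - 8 * X) (1 + 8 * X) * quarticRootSeries (-1) -
          padePoly (k + 1) (1 + 8 * X) (1 - 8 * X) * quarticRootSeries 1))) - d⁄dX ℚ
        (padePoly (k + 1) (1 - 8 * X) (1 + 8 * X) * quarticRootSeries (-1) -
          padePoly (k + 1) (1 + 8 * X) (1 - 8 * X) * quarticRootSeries 1)) =
        X * (C (16 * (4 * (k : ℚ) + 5) * (k + 1)) *
        (padePoly (k + 1) (1 - 8 * X) (1 + 8 * X) * quarticRootSeries (-1) -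
          padePoly (k + 1) (1 + 8 * X) (1 - 8 * X) * quarticRootSeries 1) -
        C (16 * (4 * (k : ℚ) + 5) * (4 * (4 * k + 3))) *
        (padePoly k (1 - 8 * X) (1 + 8 * X) * quarticRootSeries (-1) -
          padePoly k (1 + 8 * X) (1 - 8 * X) * quarticRootSeries 1)) := by
      simp only [map_sub, map_mul, map_ofNat, map_natCast, map_add, map_one]
      linear_combination h1 - h2
    generalize (padePoly (k + 1) (1 - 8 * X) (1 + 8 * X) * quarticRootSeries (-1) -
          padePoly (k + 1) (1 + 8 * X) (1 - 8 * X) * quarticRootSeries 1) = F at *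
    generalize (padePoly k (1 - 8 * X) (1 + 8 * X) * quarticRootSeries (-1) -
          padePoly k (1 + 8 * X) (1 - 8 * X) * quarticRootSeries 1) = G at *
    rw [X_pow_dvd_iff] at ih ⊢
    have hk : ((k : ℚ) + 1) ≠ 0 := by positivity
    intro m
    induction m using Nat.twoStepInduction with
    | zero => exact fun _ => h0
    | one =>
      intro _
      have := congrArg (coeff 0) h
      simp only [coeff_C_mul, map_sub, coeff_zero_X_mul, coeff_derivative] at this
      simpa [hk] using this
    | more n ih1 _ =>
      intro hn
      have := congrArg (coeff (n + 1)) h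
      simp only [coeff_C_mul, map_sub, coeff_succ_X_mul, coeff_X_mul_derivative,
        coeff_derivative, ih n (by omega), ih1 (by omega)] at this
      simp only [mul_zero, sub_zero, zero_sub, mul_neg, neg_eq_zero] at this
      have hn' : ((n + 1 : ℕ) : ℚ) + 1 ≠ 0 := by positivity
      exact (mul_eq_zero.mp ((mul_eq_zero.mp this).resolve_left hk)).resolve_right hn'

theorem Polynomial.X_pow_dvd_iff_map_powerSeries (n : ℕ) (f : Polynomial ℤ) :
    Polynomial.X ^ n ∣ f ↔ (PowerSeries.X : PowerSeries ℚ) ^ n ∣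
      ((PowerSeries.map (Int.castRingHom ℚ)).comp Polynomial.coeToPowerSeries.ringHom) f := by
  rw [Polynomial.X_pow_dvd_iff, PowerSeries.X_pow_dvd_iff]
  simp

open Polynomial in
theorem exists_polynomial_padePoly (k : ℕ) : ∃ t₁ t₂ : ℤ[X],
    t₁.coeff 0 = 1 ∧ t₂.coeff 0 = 1 ∧ X ^ (2 * k + 1) ∣ t₁ ^ 4 - (1 + 8 * X) ∧
    X ^ (2 * k + 1) ∣ t₂ ^ 4 - (1 - 8 * X) ∧
    X ^ (2 * k + 1) ∣ padePoly k (1 - 8 * X) (1 + 8 * X) * t₂ -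
      padePoly k (1 + 8 * X) (1 - 8 * X) * t₁ := by
  set φ : ℤ[X] →+* PowerSeries ℚ :=
    (PowerSeries.map (Int.castRingHom ℚ)).comp Polynomial.coeToPowerSeries.ringHom with hφ
  have hX : φ X = PowerSeries.X := by simp [hφ]
  have key : ∀ c : ℤ, ∃ t : ℤ[X], t.coeff 0 = 1 ∧
      (PowerSeries.X : PowerSeries ℚ) ^ (2 * k + 1) ∣ φ t - quarticRootSeries c := by
    intro c
    refine ⟨PowerSeries.trunc (2 * k + 1) (PowerSeries.mk fun n => c ^ n * scaledChoose 1 n),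
      ?_, ?_⟩
    · simp [PowerSeries.coeff_trunc, scaledChoose_zero]
    · rw [PowerSeries.X_pow_dvd_iff]
      intro m hm
      simp [hφ, quarticRootSeries, PowerSeries.coeff_trunc, hm]
  obtain ⟨t₁, h₁, e₁⟩ := key 1
  obtain ⟨t₂, h₂, e₂⟩ := key (-1)
  have q₁ := quarticRootSeries_pow_four 1
  have q₂ := quarticRootSeries_pow_four (-1)
  have hp := X_pow_dvd_padePoly_mul_sub k
  push_cast at q₁ q₂
  refine ⟨t₁, t₂, h₁, h₂, ?_, ?_, ?_⟩
  · rw [X_pow_dvd_iff_map_powerSeries, ← hφ]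
    simp only [map_sub, map_pow, map_add, map_mul, map_one, map_ofNat, hX]
    have : φ t₁ ^ 4 - (1 + 8 * PowerSeries.X) = (φ t₁ - quarticRootSeries 1) *
        (φ t₁ ^ 3 + φ t₁ ^ 2 * quarticRootSeries 1 + φ t₁ * quarticRootSeries 1 ^ 2 +
          quarticRootSeries 1 ^ 3) := by
      linear_combination q₁
    rw [this]
    exact e₁.mul_right _
  · rw [X_pow_dvd_iff_map_powerSeries, ← hφ]
    simp only [map_sub, map_pow, map_mul, map_one, map_ofNat, hX]
    have : φ t₂ ^ 4 - (1 - 8 * PowerSeries.X) = (φ t₂ - quarticRootSeries (-1)) *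
        (φ t₂ ^ 3 + φ t₂ ^ 2 * quarticRootSeries (-1) + φ t₂ * quarticRootSeries (-1) ^ 2 +
          quarticRootSeries (-1) ^ 3) := by
      linear_combination q₂
    rw [this]
    exact e₂.mul_right _
  · rw [X_pow_dvd_iff_map_powerSeries, ← hφ]
    simp only [map_sub, map_add, map_mul, map_one, map_ofNat, hX, map_padePoly]
    have := (hp.add (e₂.mul_left (padePoly k (1 - 8 * PowerSeries.X) (1 + 8 * PowerSeries.X)))).sub
      (e₁.mul_left (padePoly k (1 + 8 * PowerSeries.X) (1 - 8 * PowerSeries.X)))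
    convert this using 1
    ring

/-- The Padé property of `padePoly`, specialised to an exact quartic relation. -/
theorem padePoly_mul_eq_of_quartic {R : Type*} [CommRing R] (k : ℕ) {η W e : R}
    (hη : η ^ (2 * k + 1) = 0) (h2 : IsUnit (2 : R)) (hW : IsUnit W)
    (h : (1 + 8 * η) * (W + 8 * η * e) ^ 4 = (1 - 8 * η) * (W - 8 * η * e) ^ 4) :
    padePoly k (1 - 8 * η) (1 + 8 * η) * (W + 8 * η * e) =
      padePoly k (1 + 8 * η) (1 - 8 * η) * (W - 8 * η * e) := by
  obtain ⟨t₁, t₂, c₁, c₂, ⟨r₁, hr₁⟩, ⟨r₂, hr₂⟩, ⟨r, hr⟩⟩ := exists_polynomial_padePoly k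
  set f := (Polynomial.aeval (R := ℤ) η).toRingHom with hf
  have fX : f Polynomial.X = η := by simp [hf]
  have hs : ∀ t : Polynomial ℤ, t.coeff 0 = 1 → ∃ s : R, f t = 1 + η * s := by
    intro t ht
    refine ⟨f t.divX, ?_⟩
    conv_lhs => rw [← Polynomial.divX_mul_X_add t]
    rw [ht]
    simp [fX]
    ring
  obtain ⟨s₁, hs₁⟩ := hs t₁ c₁
  obtain ⟨s₂, hs₂⟩ := hs t₂ c₂
  have E₁ : f t₁ ^ 4 = 1 + 8 * η := by
    have := congrArg f hr₁
    simp only [map_sub, map_pow, map_add, map_mul, map_one, map_ofNat, fX, hη, zero_mul] at this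
    linear_combination this
  have E₂ : f t₂ ^ 4 = 1 - 8 * η := by
    have := congrArg f hr₂
    simp only [map_sub, map_pow, map_mul, map_one, map_ofNat, fX, hη, zero_mul] at this
    linear_combination this
  have E : padePoly k (1 - 8 * η) (1 + 8 * η) * f t₂ =
      padePoly k (1 + 8 * η) (1 - 8 * η) * f t₁ := by
    have := congrArg f hr
    simp only [map_sub, map_pow, map_add, map_mul, map_one, map_ofNat, fX, hη, zero_mul,
      map_padePoly] at this
    linear_combination this
  have hnil : IsNilpotent η := ⟨_, hη⟩
  have hu₂ : IsUnit (f t₂) := by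
    rw [hs₂]
    exact ((Commute.all _ _).isNilpotent_mul_right hnil).isUnit_one_add
  set u := f t₁ * (W + 8 * η * e) with hu
  set v := f t₂ * (W - 8 * η * e) with hv
  have h4 : (u - v) * ((u + v) * (u ^ 2 + v ^ 2)) = 0 := by
    have : u ^ 4 = v ^ 4 := by
      rw [hu, hv, mul_pow, mul_pow, E₁, E₂, h]
    linear_combination this
  have hunit : IsUnit ((u + v) * (u ^ 2 + v ^ 2)) := by
    obtain ⟨a, ha⟩ : ∃ a, u = W + η * a := ⟨8 * e + s₁ * (W + 8 * η * e), by rw [hu, hs₁]; ring⟩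
    obtain ⟨b, hb⟩ : ∃ b, v = W + η * b := ⟨-8 * e + s₂ * (W - 8 * η * e), by rw [hv, hs₂]; ring⟩
    have : (u + v) * (u ^ 2 + v ^ 2) = 2 * 2 * W ^ 3 + η * (
        2 * W * (2 * W * a + 2 * W * b + η * a ^ 2 + η * b ^ 2) +
        (a + b) * ((W + η * a) ^ 2 + (W + η * b) ^ 2)) := by
      rw [ha, hb]; ring
    rw [this]
    exact ((Commute.all _ _).isNilpotent_mul_right hnil).isUnit_add_left_of_commute
      ((h2.mul h2).mul (hW.pow 3)) (Commute.all _ _)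
  have huv : u = v := by
    have := hunit.mul_left_eq_zero.mp h4
    linear_combination this
  apply hu₂.mul_left_cancel
  linear_combination (W + 8 * η * e) * E + padePoly k (1 + 8 * η) (1 - 8 * η) * huv

/-- The ideal `(N ^ (k + 1), N ^ k ω)` of `ℤ[ω]`, where `ω ^ 2 = N B`. -/
def sqrtPowIdeal (N B : ℤ) (k : ℕ) : Ideal (ℤ√(N * B)) where
  carrier := {z | N ^ (k + 1) ∣ z.re ∧ N ^ k ∣ z.im}
  zero_mem' := by simp
  add_mem' := fun hx hy => ⟨dvd_add hx.1 hy.1, dvd_add hx.2 hy.2⟩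
  smul_mem' := by
    rintro ⟨a, b⟩ ⟨u, v⟩ ⟨⟨u', hu⟩, ⟨v', hv⟩⟩
    dsimp only at hu hv
    subst hu hv
    constructor
    · exact ⟨a * u' + B * b * v', by simp; ring⟩
    · exact ⟨a * v' + b * (N * u'), by simp; ring⟩

theorem mem_sqrtPowIdeal {N B : ℤ} {k : ℕ} {z : ℤ√(N * B)} :
    z ∈ sqrtPowIdeal N B k ↔ N ^ (k + 1) ∣ z.re ∧ N ^ k ∣ z.im := Iff.rfl

theorem isUnit_intCast_quotient_sqrtPowIdeal {N B : ℤ} {k : ℕ} {c : ℤ} (h : IsCoprime c N) :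
    IsUnit (c : ℤ√(N * B) ⧸ sqrtPowIdeal N B k) := by
  obtain ⟨x, y, hxy⟩ := h.pow_right (n := k + 1)
  have h0 : ((N ^ (k + 1) : ℤ) : ℤ√(N * B) ⧸ sqrtPowIdeal N B k) = 0 := by
    rw [← map_intCast (Ideal.Quotient.mk (sqrtPowIdeal N B k)), Ideal.Quotient.eq_zero_iff_mem,
      mem_sqrtPowIdeal, Zsqrtd.re_intCast, Zsqrtd.im_intCast]
    simp
  have := congrArg (Int.cast (R := ℤ√(N * B) ⧸ sqrtPowIdeal N B k)) hxy
  rw [Int.cast_add, Int.cast_mul, Int.cast_mul, h0, mul_zero, add_zero, Int.cast_one] at this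
  exact IsUnit.of_mul_eq_one _ ((mul_comm _ _).trans this)

theorem Zsqrtd.sqrtd_pow_two_mul_add_one (d : ℤ) (k : ℕ) :
    (Zsqrtd.sqrtd : ℤ√d) ^ (2 * k + 1) = ⟨0, d ^ k⟩ := by
  rw [pow_succ, pow_mul, pow_two, Zsqrtd.dmuld, ← Int.cast_pow]
  ext
  · rw [Zsqrtd.re_mul, Zsqrtd.re_intCast, Zsqrtd.im_intCast]; simp
  · rw [Zsqrtd.im_mul, Zsqrtd.re_intCast, Zsqrtd.im_intCast]; simp

theorem pow_dvd_im_padePoly_mul {N B W e : ℤ} (k : ℕ) (h2 : IsCoprime 2 N) (hB : IsCoprime B N)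
    (hW : IsCoprime W N)
    (h : ∃ r : ℤ, (⟨B, 1⟩ : ℤ√(N * B)) * ⟨B * W, e⟩ ^ 4 - ⟨B, -1⟩ * ⟨B * W, -e⟩ ^ 4 =
      ⟨0, N ^ k * r⟩) :
    N ^ k ∣ (padePoly k (⟨B, -1⟩ : ℤ√(N * B)) ⟨B, 1⟩ * ⟨B * W, e⟩).im := by
  obtain ⟨r, hr⟩ := h
  set φ := Ideal.Quotient.mk (sqrtPowIdeal N B k) with hφ
  set R := ℤ√(N * B) ⧸ sqrtPowIdeal N B k
  set w : ℤ√(N * B) := Zsqrtd.sqrtd with hw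
  have e1 : ∀ a b : ℤ, (⟨a, b⟩ : ℤ√(N * B)) = (a : ℤ√(N * B)) + b * w := by
    intro a b
    ext <;> simp [hw]
  have uB : IsUnit (B : R) := isUnit_intCast_quotient_sqrtPowIdeal hB
  have u2 : IsUnit ((2 : ℤ) : R) := isUnit_intCast_quotient_sqrtPowIdeal h2
  have uW : IsUnit (W : R) := isUnit_intCast_quotient_sqrtPowIdeal hW
  have u2' : IsUnit (2 : R) := by simpa using u2
  obtain ⟨c, hc⟩ := uB.exists_right_inv
  obtain ⟨t, ht⟩ := u2'.exists_right_inv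
  have hη : (φ w * (c * t ^ 3)) ^ (2 * k + 1) = 0 := by
    rw [mul_pow, ← map_pow, hw, Zsqrtd.sqrtd_pow_two_mul_add_one]
    have : φ (⟨0, (N * B) ^ k⟩) = 0 := by
      rw [hφ, Ideal.Quotient.eq_zero_iff_mem, mem_sqrtPowIdeal]
      simp [mul_pow]
    rw [this, zero_mul]
  have h8 : (B : R) * (8 * (φ w * (c * t ^ 3))) = φ w := by
    have h3 : (2 * t) ^ 3 = 1 := by rw [ht, one_pow]
    linear_combination φ w * h3 + φ w * (2 * t) ^ 3 * hc
  generalize φ w * (c * t ^ 3) = η at hη h8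
  have hr' := congrArg φ hr
  have hr0 : φ (⟨0, N ^ k * r⟩) = 0 := by
    rw [hφ, Ideal.Quotient.eq_zero_iff_mem, mem_sqrtPowIdeal]
    simp
  rw [hr0, e1, e1, e1, e1] at hr'
  simp only [map_sub, map_mul, map_pow, map_add, map_intCast, map_neg, map_one, Int.cast_neg,
    Int.cast_one, Int.cast_mul, ← h8] at hr'
  have key := padePoly_mul_eq_of_quartic k (η := η) (W := (W : R)) (e := (e : R)) hη u2' uW (by
    apply (uB.pow 5).mul_left_cancel
    linear_combination hr')
  have hz : φ (padePoly k (⟨B, -1⟩ : ℤ√(N * B)) ⟨B, 1⟩ * ⟨B * W, e⟩ -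
      padePoly k (⟨B, 1⟩ : ℤ√(N * B)) ⟨B, -1⟩ * ⟨B * W, -e⟩) = 0 := by
    rw [e1, e1, e1, e1]
    simp only [map_sub, map_mul, map_add, map_intCast, map_neg, map_one, Int.cast_neg, Int.cast_one,
      Int.cast_mul, map_padePoly, ← h8]
    have p1 := padePoly_mul_mul k (B : R) (1 - 8 * η) (1 + 8 * η)
    have p2 := padePoly_mul_mul k (B : R) (1 + 8 * η) (1 - 8 * η)
    have a1 : (B : R) * (1 - 8 * η) = B + -1 * (B * (8 * η)) := by ring
    have a2 : (B : R) * (1 + 8 * η) = B + 1 * (B * (8 * η)) := by ring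
    rw [a1, a2] at p1 p2
    rw [p1, p2]
    linear_combination (B : R) ^ (k + 1) * key
  rw [hφ, Ideal.Quotient.eq_zero_iff_mem, mem_sqrtPowIdeal] at hz
  have hs : padePoly k (⟨B, 1⟩ : ℤ√(N * B)) ⟨B, -1⟩ * ⟨B * W, -e⟩ =
      star (padePoly k (⟨B, -1⟩ : ℤ√(N * B)) ⟨B, 1⟩ * ⟨B * W, e⟩) := by
    rw [← starRingEnd_apply, map_mul, map_padePoly]
    simp [starRingEnd_apply, Zsqrtd.star_mk]
  have := hz.2
  rw [hs, Zsqrtd.im_sub, Zsqrtd.im_star, sub_neg_eq_add, ← two_mul] at this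
  exact (h2.symm.pow_left).dvd_of_dvd_mul_left this

theorem mul_mem_zmultiples_pow_mod_two {s : ℝ} {B : ℤ} (hs : s ^ 2 = B) {r : ℕ} {u : ℝ}
    (hu : u ∈ AddSubgroup.zmultiples (s ^ (r % 2))) :
    s * u ∈ AddSubgroup.zmultiples (s ^ ((r + 1) % 2)) := by
  obtain ⟨z, rfl⟩ := AddSubgroup.mem_zmultiples_iff.mp hu
  rw [AddSubgroup.mem_zmultiples_iff]
  simp only [zsmul_eq_mul]
  rcases Nat.mod_two_eq_zero_or_one r with h | h
  · exact ⟨z, by rw [Nat.add_mod, h]; norm_num; ring⟩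
  · refine ⟨B * z, ?_⟩
    rw [Nat.add_mod, h]
    norm_num
    linear_combination -(z : ℝ) * hs

theorem intCast_mul_mem_zmultiples {s u : ℝ} (c : ℤ) (hu : u ∈ AddSubgroup.zmultiples s) :
    (c : ℝ) * u ∈ AddSubgroup.zmultiples s := by
  rw [← zsmul_eq_mul]
  exact AddSubgroup.zsmul_mem _ hu c

theorem pow_add_pow_mem_zmultiples {a b : ℝ} {B c : ℤ} (hs : (a + b) ^ 2 = B) (hc : a * b = c)
    (n : ℕ) : a ^ n + b ^ n ∈ AddSubgroup.zmultiples ((a + b) ^ (n % 2)) := by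
  induction n using Nat.twoStepInduction with
  | zero => exact AddSubgroup.mem_zmultiples_iff.mpr ⟨2, by norm_num⟩
  | one => exact AddSubgroup.mem_zmultiples_iff.mpr ⟨1, by norm_num⟩
  | more n ih1 ih2 =>
    have : a ^ (n + 2) + b ^ (n + 2) =
        (a + b) * (a ^ (n + 1) + b ^ (n + 1)) - c * (a ^ n + b ^ n) := by
      rw [← hc]; ring
    rw [this]
    have h := intCast_mul_mem_zmultiples c ih1
    rw [← Nat.add_mod_right n 2] at h
    exact AddSubgroup.sub_mem _ (mul_mem_zmultiples_pow_mod_two hs ih2) h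

theorem pow_sub_pow_div_mem_zmultiples {a b : ℝ} (hab : a ≠ b) {B c : ℤ} (hs : (a + b) ^ 2 = B)
    (hc : a * b = c) (n : ℕ) :
    (b ^ n - a ^ n) / (b - a) ∈ AddSubgroup.zmultiples ((a + b) ^ ((n + 1) % 2)) := by
  have h0 : b - a ≠ 0 := sub_ne_zero.mpr hab.symm
  induction n using Nat.twoStepInduction with
  | zero => exact AddSubgroup.mem_zmultiples_iff.mpr ⟨0, by norm_num⟩
  | one => exact AddSubgroup.mem_zmultiples_iff.mpr ⟨1, by field_simp; norm_num⟩
  | more n ih1 ih2 =>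
    have : (b ^ (n + 2) - a ^ (n + 2)) / (b - a) =
        (a + b) * ((b ^ (n + 1) - a ^ (n + 1)) / (b - a)) - c * ((b ^ n - a ^ n) / (b - a)) := by
      rw [← hc]; field_simp; ring
    rw [this]
    have h := intCast_mul_mem_zmultiples c ih1
    rw [← Nat.add_mod_right (n + 1) 2] at h
    exact AddSubgroup.sub_mem _ (mul_mem_zmultiples_pow_mod_two hs ih2) h

theorem pow_mul_pow_add_mem_zmultiples {a b : ℝ} {B c : ℤ} (hs : (a + b) ^ 2 = B)
    (hc : a * b = c) (i j : ℕ) :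
    a ^ i * b ^ j + b ^ i * a ^ j ∈ AddSubgroup.zmultiples ((a + b) ^ ((i + j) % 2)) := by
  induction i generalizing j with
  | zero =>
    have := pow_add_pow_mem_zmultiples hs hc j
    simpa [add_comm] using this
  | succ i ih =>
    cases j with
    | zero => simpa using pow_add_pow_mem_zmultiples hs hc (i + 1)
    | succ j =>
      have e1 : a ^ (i + 1) * b ^ (j + 1) + b ^ (i + 1) * a ^ (j + 1) =
        c * (a ^ i * b ^ j + b ^ i * a ^ j) := by rw [← hc]; ring
      have e2 : i + 1 + (j + 1) = i + j + 2 := by ring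
      rw [e1, e2, Nat.add_mod_right]
      exact intCast_mul_mem_zmultiples c (ih j)

theorem pow_mul_pow_sub_div_mem_zmultiples {a b : ℝ} (hab : a ≠ b) {B c : ℤ}
    (hs : (a + b) ^ 2 = B) (hc : a * b = c) (i j : ℕ) :
    (a ^ i * b ^ j - b ^ i * a ^ j) / (b - a) ∈
      AddSubgroup.zmultiples ((a + b) ^ ((i + j + 1) % 2)) := by
  induction i generalizing j with
  | zero =>
    have := pow_sub_pow_div_mem_zmultiples hab hs hc j
    simpa using this
  | succ i ih =>
    cases j with
    | zero =>
      have := AddSubgroup.neg_mem _ (pow_sub_pow_div_mem_zmultiples hab hs hc (i + 1))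
      rw [← neg_div, neg_sub] at this
      simpa using this
    | succ j =>
      have e1 : (a ^ (i + 1) * b ^ (j + 1) - b ^ (i + 1) * a ^ (j + 1)) / (b - a) =
        c * ((a ^ i * b ^ j - b ^ i * a ^ j) / (b - a)) := by rw [← hc]; ring
      have e2 : i + 1 + (j + 1) + 1 = i + j + 1 + 2 := by ring
      rw [e1, e2, Nat.add_mod_right]
      exact intCast_mul_mem_zmultiples c (ih j)

theorem exists_int_padePoly_mul_sub {a b : ℝ} (hab : a ≠ b) (hs0 : a + b ≠ 0) {B c : ℤ}
    (hs : (a + b) ^ 2 = B) (hc : a * b = c) {W e : ℤ} (hW : Odd W) (he : Odd e)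
    (hdvd : e ∣ B * W ^ 2) (k : ℕ) :
    ∃ H : ℤ, padePoly k a b * ((a + b) * W + (b - a) * e) -
      padePoly k b a * ((a + b) * W - (b - a) * e) = 2 * (b - a) * ((a + b) ^ (k % 2) * H) ∧
      e ∣ B ^ (k % 2) * H ^ 2 := by
  have h0 : b - a ≠ 0 := sub_ne_zero.mpr hab.symm
  obtain ⟨f₁, hf₁⟩ := (hW.add_odd he).two_dvd
  obtain ⟨f₂, hf₂⟩ := (hW.sub_odd he).two_dvd
  have hf₁' : (W : ℝ) + e = 2 * f₁ := by exact_mod_cast hf₁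
  have hf₂' : (W : ℝ) - e = 2 * f₂ := by exact_mod_cast hf₂
  have hH : (∑ ij ∈ antidiagonal k, (padeCoeff ij : ℝ) *
      (f₁ * ((a ^ ij.1 * b ^ (ij.2 + 1) - b ^ ij.1 * a ^ (ij.2 + 1)) / (b - a)) +
        f₂ * ((a ^ (ij.1 + 1) * b ^ ij.2 - b ^ (ij.1 + 1) * a ^ ij.2) / (b - a)))) ∈
      AddSubgroup.zmultiples ((a + b) ^ (k % 2)) := by
    apply AddSubgroup.sum_mem
    intro ij hij
    have hk : ij.1 + ij.2 = k := HasAntidiagonal.mem_antidiagonal.mp hij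
    apply intCast_mul_mem_zmultiples
    have e1 := pow_mul_pow_sub_div_mem_zmultiples hab hs hc ij.1 (ij.2 + 1)
    have e2 := pow_mul_pow_sub_div_mem_zmultiples hab hs hc (ij.1 + 1) ij.2
    rw [show ij.1 + (ij.2 + 1) + 1 = k + 2 by omega, Nat.add_mod_right] at e1
    rw [show ij.1 + 1 + ij.2 + 1 = k + 2 by omega, Nat.add_mod_right] at e2
    exact AddSubgroup.add_mem _ (intCast_mul_mem_zmultiples _ e1) (intCast_mul_mem_zmultiples _ e2)
  have hZ0 : (∑ ij ∈ antidiagonal k, (padeCoeff ij : ℝ) *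
      ((a ^ ij.1 * b ^ ij.2 - b ^ ij.1 * a ^ ij.2) / (b - a))) ∈
      AddSubgroup.zmultiples ((a + b) ^ ((k + 1) % 2)) := by
    apply AddSubgroup.sum_mem
    intro ij hij
    have hk : ij.1 + ij.2 = k := HasAntidiagonal.mem_antidiagonal.mp hij
    apply intCast_mul_mem_zmultiples
    rw [← hk]
    exact pow_mul_pow_sub_div_mem_zmultiples hab hs hc ij.1 ij.2
  have hZ2 : (∑ ij ∈ antidiagonal k, (padeCoeff ij : ℝ) *
      (a ^ ij.1 * b ^ ij.2 + b ^ ij.1 * a ^ ij.2)) ∈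
      AddSubgroup.zmultiples ((a + b) ^ (k % 2)) := by
    apply AddSubgroup.sum_mem
    intro ij hij
    have hk : ij.1 + ij.2 = k := HasAntidiagonal.mem_antidiagonal.mp hij
    apply intCast_mul_mem_zmultiples
    rw [← hk]
    exact pow_mul_pow_add_mem_zmultiples hs hc ij.1 ij.2
  have hZ1 := mul_mem_zmultiples_pow_mod_two hs hZ0
  rw [add_assoc, Nat.add_mod_right] at hZ1
  obtain ⟨H, hH⟩ := AddSubgroup.mem_zmultiples_iff.mp hH
  obtain ⟨z₀, hz₀⟩ := AddSubgroup.mem_zmultiples_iff.mp hZ0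
  obtain ⟨z₁, hz₁⟩ := AddSubgroup.mem_zmultiples_iff.mp hZ1
  obtain ⟨z₂, hz₂⟩ := AddSubgroup.mem_zmultiples_iff.mp hZ2
  rw [zsmul_eq_mul, mul_comm] at hH hz₀ hz₁ hz₂
  have hmain : padePoly k a b * ((a + b) * W + (b - a) * e) -
      padePoly k b a * ((a + b) * W - (b - a) * e) = 2 * (b - a) * ((a + b) ^ (k % 2) * H) := by
    rw [hH, mul_sum]
    unfold padePoly
    rw [sum_mul, sum_mul, ← sum_sub_distrib]
    refine sum_congr rfl fun ij _ => ?_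
    field_simp
    linear_combination (padeCoeff ij : ℝ) * ((a ^ ij.1 * b ^ (ij.2 + 1) -
      b ^ ij.1 * a ^ (ij.2 + 1)) * hf₁' + (a ^ (ij.1 + 1) * b ^ ij.2 -
      b ^ (ij.1 + 1) * a ^ ij.2) * hf₂')
  refine ⟨H, hmain, ?_⟩
  have hd : padePoly k a b - padePoly k b a = (b - a) * ((a + b) ^ ((k + 1) % 2) * z₀) := by
    rw [hz₀, mul_sum]
    unfold padePoly
    rw [← sum_sub_distrib]
    refine sum_congr rfl fun ij _ => ?_
    field_simp
  have ha : padePoly k a b + padePoly k b a = ((a + b) ^ (k % 2) * z₂) := by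
    rw [hz₂]
    unfold padePoly
    rw [← sum_add_distrib]
    exact sum_congr rfl fun ij _ => by ring
  rw [← hz₀] at hz₁
  have hr : (a + b) ^ (k % 2) ≠ 0 := pow_ne_zero _ hs0
  have h2H : 2 * H = W * z₁ + e * z₂ := by
    have : (2 : ℝ) * H = W * z₁ + e * z₂ := by
      apply mul_left_cancel₀ (mul_ne_zero h0 hr)
      linear_combination -hmain + (a + b) * W * hd + (b - a) * e * ha - (b - a) * W * hz₁
    exact_mod_cast this
  have hB : ∀ n : ℕ, ((a + b) ^ n) ^ 2 = (B : ℝ) ^ n := fun n => by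
    rw [← pow_mul, mul_comm, pow_mul, hs]
  have hz : B ^ (k % 2) * z₁ ^ 2 = B * (B ^ ((k + 1) % 2) * z₀ ^ 2) := by
    have : (B : ℝ) ^ (k % 2) * z₁ ^ 2 = B * (B ^ ((k + 1) % 2) * z₀ ^ 2) := by
      rw [← hB, ← hB, ← hs]
      linear_combination ((a + b) ^ (k % 2) * z₁ + (a + b) * ((a + b) ^ ((k + 1) % 2) * z₀)) * hz₁
    exact_mod_cast this
  have h4 : e ∣ 4 * (B ^ (k % 2) * H ^ 2) := by
    have : 4 * (B ^ (k % 2) * H ^ 2) = B * W ^ 2 * (B ^ ((k + 1) % 2) * z₀ ^ 2) +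
        e * (B ^ (k % 2) * (2 * W * z₁ * z₂ + e * z₂ ^ 2)) := by
      linear_combination B ^ (k % 2) * (2 * H + (W * z₁ + e * z₂)) * h2H + W ^ 2 * hz
    rw [this]
    exact dvd_add (hdvd.mul_right _) (dvd_mul_right _ _)
  have hcop : IsCoprime e 4 := by
    have := (Int.isCoprime_two_right.mpr he).pow_right (n := 2)
    norm_num at this
    exact this
  exact hcop.dvd_of_dvd_mul_left h4

theorem padePoly_mul_sub_ne_zero {a b x y : ℝ} (hab : a ≠ b) (hxy : x ≠ y) (k : ℕ)
    (hk : padePoly k a b * x - padePoly k b a * y = 0) :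
    padePoly (k + 1) a b * x - padePoly (k + 1) b a * y ≠ 0 := by
  induction k with
  | zero =>
    rw [padePoly_zero, padePoly_zero, one_mul, one_mul] at hk
    exact absurd hk (sub_ne_zero.mpr hxy)
  | succ k ih =>
    intro h
    by_cases h0 : padePoly k a b * x - padePoly k b a * y = 0
    · exact ih h0 hk
    · have h1 := padePoly_recurrence k a b
      have h2 := padePoly_recurrence k b a
      have h3 : (64 * ((k : ℝ) + 1) ^ 2 - 4) * (b - a) ^ 2 *
          (padePoly k a b * x - padePoly k b a * y) = 0 := by
        linear_combination x * h1 - y * h2 - ((k : ℝ) + 1) * (k + 2) * h +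
          8 * ((k : ℝ) + 1) * (2 * k + 3) * (a + b) * hk
      have h4 : 64 * ((k : ℝ) + 1) ^ 2 - 4 ≠ 0 := by
        have : (0 : ℝ) ≤ k := k.cast_nonneg
        nlinarith
      have h5 := sub_ne_zero.mpr hab.symm
      simp [h4, h5, h0] at h3

theorem padeX_eval_one_sq_lt (n : ℕ) :
    16385 * (padeX (2 * (n + 1))).eval 1 ^ 2 < 16384 * 2 ^ (17 * (n + 1)) := by
  induction n with
  | zero =>
    have h0 := padeX_eval_one_succ 0
    have h1 := padeX_eval_one_succ 1
    have : (padeX 0).eval 1 = 1 := by simp [padeX, padePoly_zero]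
    rw [this] at h0
    norm_num at h0 h1 ⊢
    have h2 : (padeX 2).eval 1 = 360 := by linarith
    rw [h2]
    norm_num
  | succ n ih =>
    have h0 := padeX_eval_one_succ (2 * (n + 1))
    have h1 := padeX_eval_one_succ (2 * (n + 1) + 1)
    have hpos := padeX_eval_one_pos (2 * (n + 1))
    have hpos' := padeX_eval_one_pos (2 * (n + 1) + 1 + 1)
    rw [show 2 * (n + 1 + 1) = 2 * (n + 1) + 1 + 1 by ring,
      show 17 * (n + 1 + 1) = 17 * (n + 1) + 17 by ring, pow_add]
    generalize (padeX (2 * (n + 1))).eval 1 = u at *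
    generalize (padeX (2 * (n + 1) + 1)).eval 1 = v at *
    generalize (padeX (2 * (n + 1) + 1 + 1)).eval 1 = w at *
    push_cast at h0 h1
    have hn : (0 : ℝ) ≤ n := n.cast_nonneg
    have hw : w ≤ 352 * u := by
      have e : (2 * ((n : ℝ) + 1) + 1) * (2 * (n + 1) + 1 + 1) * w =
          16 * (4 * (2 * (n + 1)) + 5) * (4 * (2 * (n + 1) + 1) + 5) * u := by
        linear_combination (2 * ((n : ℝ) + 1) + 1) * h1 +
          4 * (4 * (2 * ((n : ℝ) + 1) + 1) + 5) * h0
      by_contra! hlt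
      have hp : 0 < (2 * ((n : ℝ) + 1) + 1) * (2 * (n + 1) + 1 + 1) := by positivity
      have := mul_lt_mul_of_pos_left hlt hp
      rw [e] at this
      have h6 : 0 ≤ (96 * (n : ℝ) + 16 * 24 * n ^ 2 + 1) * u := by positivity
      nlinarith [mul_nonneg hn hpos.le, mul_nonneg (mul_nonneg hn hn) hpos.le]
    have : w ^ 2 ≤ (352 * u) ^ 2 := by gcongr
    nlinarith

theorem padeX_eval_one_sq_succ_le (n : ℕ) :
    9 * (padeX (2 * (n + 1) + 1)).eval 1 ^ 2 ≤ 2704 * (padeX (2 * (n + 1))).eval 1 ^ 2 := by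
  have h0 := padeX_eval_one_succ (2 * (n + 1))
  have hpos := padeX_eval_one_pos (2 * (n + 1))
  have hpos' := padeX_eval_one_pos (2 * (n + 1) + 1)
  generalize (padeX (2 * (n + 1))).eval 1 = u at *
  generalize (padeX (2 * (n + 1) + 1)).eval 1 = v at *
  push_cast at h0
  have hn : (0 : ℝ) ≤ n := n.cast_nonneg
  have : 3 * v ≤ 52 * u := by
    have hp : 0 < 2 * ((n : ℝ) + 1) + 1 := by positivity
    by_contra! hlt
    have := mul_lt_mul_of_pos_left hlt hp
    nlinarith [mul_nonneg hn hpos.le]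
  have : (3 * v) ^ 2 ≤ (52 * u) ^ 2 := by gcongr
  linarith

theorem lt_four_pow_mul_pow {N : ℝ} (hN : 8192 ≤ N) {n k : ℕ} (hn : 1 ≤ n)
    (hk : k = 2 * n ∨ k = 2 * n + 1) :
    (padeX k).eval 1 ^ 2 * (N ^ n + 1 / 2) < 4 ^ k * N ^ k := by
  obtain ⟨n, rfl⟩ := Nat.exists_eq_add_of_le' hn
  have h1 := padeX_eval_one_sq_lt n
  have h2 := padeX_eval_one_sq_succ_le n
  have hM : (8192 : ℝ) ^ (n + 1) ≤ N ^ (n + 1) := by gcongr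
  have hM' : 8192 ≤ N ^ (n + 1) := by
    calc (8192 : ℝ) ≤ N := hN
      _ ≤ N ^ (n + 1) := le_self_pow₀ (by linarith) (by omega)
  rw [pow_mul] at h1
  norm_num at h1
  have hs : (131072 : ℝ) ^ (n + 1) = 16 ^ (n + 1) * 8192 ^ (n + 1) := by
    rw [← mul_pow]; norm_num
  rw [hs] at h1
  have h16 : (0 : ℝ) < 16 ^ (n + 1) := by positivity
  have e4 : (4 : ℝ) ^ (2 * (n + 1)) = 16 ^ (n + 1) := by rw [pow_mul]; norm_num
  have eN : N ^ (2 * (n + 1)) = N ^ (n + 1) * N ^ (n + 1) := by rw [two_mul, pow_add]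
  have key : (padeX (2 * (n + 1))).eval 1 ^ 2 * (N ^ (n + 1) + 1 / 2) <
      16 ^ (n + 1) * (N ^ (n + 1) * N ^ (n + 1)) := by
    generalize N ^ (n + 1) = M at *
    generalize (padeX (2 * (n + 1))).eval 1 ^ 2 = u at *
    have hu : 16385 * u < 16384 * (16 ^ (n + 1) * M) := by
      nlinarith
    nlinarith
  rcases hk with rfl | rfl
  · rw [e4, eN]
    exact key
  · rw [pow_succ 4 (2 * (n + 1)), pow_succ N (2 * (n + 1)), e4, eN]
    have hpos : 0 ≤ N ^ (n + 1) + 1 / 2 := by linarith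
    have h3 := mul_le_mul_of_nonneg_right h2 hpos
    have h4 : 0 < 16 ^ (n + 1) * (N ^ (n + 1) * N ^ (n + 1)) := by positivity
    nlinarith

theorem pow_dvd_of_lift {N B W e H : ℤ} {s t : ℝ} (hs : s ^ 2 = B) (ht : t ^ 2 = N)
    (hs0 : s ≠ 0) (ht0 : t ≠ 0) (k : ℕ) (h2 : IsCoprime 2 N) (hB : IsCoprime B N)
    (hF : padePoly k ((s - t) / 2) ((s + t) / 2) * (s * W + t * e) -
      padePoly k ((s + t) / 2) ((s - t) / 2) * (s * W - t * e) = 2 * t * (s ^ (k % 2) * H))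
    (hd : N ^ k ∣ (padePoly k (⟨B, -1⟩ : ℤ√(N * B)) ⟨B, 1⟩ * ⟨B * W, e⟩).im) :
    N ^ k ∣ H := by
  set z := padePoly k (⟨B, -1⟩ : ℤ√(N * B)) ⟨B, 1⟩ * ⟨B * W, e⟩ with hz
  have hsz : star z = padePoly k (⟨B, 1⟩ : ℤ√(N * B)) ⟨B, -1⟩ * ⟨B * W, -e⟩ := by
    rw [hz, ← starRingEnd_apply, map_mul, map_padePoly]
    simp [starRingEnd_apply, Zsqrtd.star_mk]
  set f : ℤ√(N * B) →+* ℝ := Zsqrtd.lift ⟨s * t, by push_cast; rw [← hs, ← ht]; ring⟩ with hf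
  have hfm : ∀ x y : ℤ, f ⟨x, y⟩ = x + y * (s * t) := by
    intro x y
    simp [hf]
  have h1 : f z = (2 * s) ^ k * padePoly k ((s - t) / 2) ((s + t) / 2) * (s * (s * W + t * e)) := by
    rw [hz, map_mul, map_padePoly, hfm, hfm, hfm, ← padePoly_mul_mul]
    congr 1
    · congr 1
      · push_cast; rw [← hs]; ring
      · push_cast; rw [← hs]; ring
    · push_cast; rw [← hs]; ring
  have h3 : f (star z) =
      (2 * s) ^ k * padePoly k ((s + t) / 2) ((s - t) / 2) * (s * (s * W - t * e)) := by
    rw [hsz, map_mul, map_padePoly, hfm, hfm, hfm, ← padePoly_mul_mul]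
    congr 1
    · congr 1
      · push_cast; rw [← hs]; ring
      · push_cast; rw [← hs]; ring
    · push_cast; rw [← hs]; ring
  have h4 : f z - f (star z) = 2 * z.im * (s * t) := by
    have : ∀ y : ℤ√(N * B), f y - f (star y) = 2 * y.im * (s * t) := by
      rintro ⟨x, y⟩
      rw [Zsqrtd.star_mk, hfm, hfm]
      push_cast
      ring
    exact this z
  have h5 : (z.im : ℝ) = 2 ^ k * (s ^ (k + k % 2) * H) := by
    apply mul_left_cancel₀ (mul_ne_zero two_ne_zero (mul_ne_zero hs0 ht0))
    rw [pow_add]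
    have : (2 * s) ^ k = 2 ^ k * s ^ k := mul_pow _ _ _
    rw [this] at h1 h3
    linear_combination -h4 + h1 - h3 + 2 ^ k * s ^ k * s * hF
  obtain ⟨j, hj⟩ : ∃ j, k + k % 2 = 2 * j := ⟨(k + k % 2) / 2, by omega⟩
  rw [hj, pow_mul, hs] at h5
  have h6 : z.im = 2 ^ k * (B ^ j * H) := by exact_mod_cast h5
  rw [h6] at hd
  exact (hB.symm.pow).dvd_of_dvd_mul_left ((h2.symm.pow).dvd_of_dvd_mul_left hd)

theorem four_pow_mul_pow_le {N B W e q H : ℤ} {s t : ℝ} (hs : s ^ 2 = B) (ht : t ^ 2 = N)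
    (hs0 : 0 < s) (hst : s ≤ t) (he0 : e ≠ 0) (hH : H ≠ 0) (k : ℕ)
    (heW : e * (N * e + 4 * q) = B * W ^ 2)
    (hF : padePoly k ((s - t) / 2) ((s + t) / 2) * (s * W + t * e) -
      padePoly k ((s + t) / 2) ((s - t) / 2) * (s * W - t * e) = 2 * t * (s ^ (k % 2) * H))
    (hN : IsCoprime e N) (hd : N ^ k ∣ H) (hde : e ∣ B ^ (k % 2) * H ^ 2) :
    4 ^ k * (N : ℝ) ^ k * N ≤ (padeX k).eval 1 ^ 2 * (N * |(e : ℝ)| + 4 * |(q : ℝ)|) := by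
  have ht0 : 0 < t := hs0.trans_le hst
  have hNpos : (0 : ℝ) < N := by rw [← ht]; positivity
  have hBpos : (0 : ℝ) < B := by rw [← hs]; positivity
  have hepos : (0 : ℝ) < |(e : ℝ)| := by positivity
  have hab : (s - t) / 2 ≠ (s + t) / 2 := fun h => ht0.ne' (by linarith)
  have hle : |(s - t) / 2 + (s + t) / 2| ≤ |(s + t) / 2 - (s - t) / 2| := by
    rw [show (s - t) / 2 + (s + t) / 2 = s by ring, show (s + t) / 2 - (s - t) / 2 = t by ring,
      abs_of_pos hs0, abs_of_pos ht0]
    exact hst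
  have b1 := abs_padePoly_le k hab hle
  have b2 := abs_padePoly_le k hab.symm (by rwa [add_comm, abs_sub_comm ((s - t) / 2)])
  rw [show (s + t) / 2 - (s - t) / 2 = t by ring, abs_of_pos ht0] at b1
  rw [show (s - t) / 2 - (s + t) / 2 = -t by ring, abs_neg, abs_of_pos ht0] at b2
  set M := (t / 2) ^ k * (padeX k).eval 1 with hM
  have hM0 : 0 ≤ M := (abs_nonneg _).trans b1
  have hlow : (N : ℝ) ^ (2 * k) * |(e : ℝ)| ≤ (s ^ (k % 2) * H) ^ 2 := by
    have h1 : N ^ (2 * k) * e ∣ B ^ (k % 2) * H ^ 2 := by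
      apply IsCoprime.mul_dvd (hN.symm.pow_left) _ hde
      rw [mul_comm 2 k, pow_mul]
      exact (pow_dvd_pow_of_dvd hd 2).mul_left _
    have hB0 : B ≠ 0 := by exact_mod_cast hBpos.ne'
    have h2 := Int.le_of_dvd (by
      have : 0 < B := by exact_mod_cast hBpos
      positivity) ((abs_dvd _ _).mpr h1)
    rw [abs_mul, abs_pow, pow_mul, sq_abs, ← pow_mul] at h2
    have h3 : (N : ℝ) ^ (2 * k) * |(e : ℝ)| ≤ B ^ (k % 2) * H ^ 2 := by exact_mod_cast h2
    have h4 : (s ^ (k % 2) * H) ^ 2 = B ^ (k % 2) * (H : ℝ) ^ 2 := by rw [← hs]; ring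
    rw [h4]
    exact h3
  have hup : (2 * t * (s ^ (k % 2) * H)) ^ 2 ≤
      (M * (|s * W + t * e| + |s * W - t * e|)) ^ 2 := by
    rw [← hF]
    apply sq_le_sq'
    all_goals
      have c1 := mul_le_mul_of_nonneg_right b1 (abs_nonneg (s * W + t * e))
      have c2 := mul_le_mul_of_nonneg_right b2 (abs_nonneg (s * W - t * e))
      rw [← abs_mul] at c1 c2
      have d1 := abs_le.mp c1
      have d2 := abs_le.mp c2
      linarith [d1.1, d1.2, d2.1, d2.2]
  have hx : (s * W) ^ 2 = N * |(e : ℝ)| ^ 2 + 4 * q * e := by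
    rw [mul_pow, hs, sq_abs]
    have : ((e * (N * e + 4 * q) : ℤ) : ℝ) = (B * W ^ 2 : ℤ) := by rw [heW]
    push_cast at this
    linear_combination -this
  have hy : (t * e) ^ 2 = N * |(e : ℝ)| ^ 2 := by rw [mul_pow, ht, sq_abs]
  have hqe : |4 * (q : ℝ) * e| = 4 * |(q : ℝ)| * |(e : ℝ)| := by
    rw [abs_mul, abs_mul]; norm_num
  have hT : (|s * W + t * e| + |s * W - t * e|) ^ 2 ≤
      4 * (N * |(e : ℝ)| ^ 2 + 4 * |(q : ℝ)| * |(e : ℝ)|) := by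
    have e1 : |s * W + t * e| * |s * W - t * e| = |4 * (q : ℝ) * e| := by
      rw [← abs_mul]
      congr 1
      linear_combination hx - hy
    have e2 := le_abs_self (4 * (q : ℝ) * e)
    have : (|s * W + t * e| + |s * W - t * e|) ^ 2 =
        2 * (s * W) ^ 2 + 2 * (t * e) ^ 2 + 2 * |4 * (q : ℝ) * e| := by
      rw [← e1]
      linear_combination sq_abs (s * W + t * e) + sq_abs (s * W - t * e)
    rw [this, hx, hy, ← hqe]
    linarith
  have hfin : 4 * N * ((N : ℝ) ^ (2 * k) * |(e : ℝ)|) ≤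
      M ^ 2 * (4 * (N * |(e : ℝ)| ^ 2 + 4 * |(q : ℝ)| * |(e : ℝ)|)) := by
    calc 4 * N * ((N : ℝ) ^ (2 * k) * |(e : ℝ)|) ≤ 4 * N * (s ^ (k % 2) * H) ^ 2 := by gcongr
      _ = (2 * t * (s ^ (k % 2) * H)) ^ 2 := by rw [← ht]; ring
      _ ≤ _ := hup
      _ = M ^ 2 * (|s * W + t * e| + |s * W - t * e|) ^ 2 := by rw [mul_pow]
      _ ≤ _ := by gcongr
  have hM2 : 4 ^ k * M ^ 2 = (N : ℝ) ^ k * (padeX k).eval 1 ^ 2 := by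
    rw [hM, ← ht, show (4 : ℝ) = 2 ^ 2 by norm_num, ← pow_mul, ← pow_mul, mul_pow, div_pow]
    rw [mul_comm 2 k, pow_mul, pow_mul]
    field_simp
  have hNk : (0 : ℝ) < (N : ℝ) ^ k := by positivity
  have hc : 0 < 4 * (N : ℝ) ^ k * |(e : ℝ)| := by positivity
  apply le_of_mul_le_mul_left _ hc
  have h4k : (0 : ℝ) < 4 ^ k := by positivity
  have := mul_le_mul_of_nonneg_left hfin h4k.le
  have e2 : (N : ℝ) ^ (2 * k) = N ^ k * N ^ k := by rw [two_mul, pow_add]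
  rw [e2] at this
  linear_combination this + (4 * (N * |(e : ℝ)| ^ 2 + 4 * |(q : ℝ)| * |(e : ℝ)|)) * hM2

theorem Zsqrtd.quartic_relation {N B q W C e : ℤ} {m : ℕ} (hN : N = 4 * q ^ 2 + B)
    (h1 : 4 * q ^ 2 * C ^ 2 + B * W ^ 2 = N ^ m) (heW : e * (N * e + 4 * q) = B * W ^ 2)
    (hD : 4 * q ^ 2 * C - B * W = 2 * q + N * e) :
    (⟨B, 1⟩ : ℤ√(N * B)) * ⟨B * W, e⟩ ^ 4 - ⟨B, -1⟩ * ⟨B * W, -e⟩ ^ 4 =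
      ⟨0, N ^ m * (32 * B ^ 2 * e ^ 2 * q ^ 2)⟩ := by
  set D := 4 * q ^ 2 * C - B * W with hDdef
  have hsq : ∀ ε : ℤ, ε ^ 2 = 1 → (⟨B * W, ε * e⟩ : ℤ√(N * B)) ^ 2 =
      ⟨2 * B * e * D, ε * (2 * B * e * W)⟩ := by
    intro ε hε
    rw [pow_two, Zsqrtd.ext_iff, Zsqrtd.re_mul, Zsqrtd.im_mul]
    constructor
    · dsimp only
      linear_combination N * B * e ^ 2 * hε - B * heW - 2 * B * e * hD
    · dsimp only
      ring
  have h4 : ∀ ε : ℤ, ε ^ 2 = 1 → (⟨B * W, ε * e⟩ : ℤ√(N * B)) ^ 4 =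
      ⟨4 * B ^ 2 * e ^ 2 * (D ^ 2 + N * B * W ^ 2), ε * (8 * B ^ 2 * e ^ 2 * D * W)⟩ := by
    intro ε hε
    rw [show 4 = 2 * 2 by rfl, pow_mul, hsq ε hε, pow_two, Zsqrtd.ext_iff, Zsqrtd.re_mul,
      Zsqrtd.im_mul]
    constructor
    · dsimp only
      linear_combination 4 * N * B ^ 3 * e ^ 2 * W ^ 2 * hε
    · dsimp only
      ring
  have hp := h4 1 (by norm_num)
  have hm := h4 (-1) (by norm_num)
  rw [one_mul, one_mul] at hp
  rw [neg_one_mul, neg_one_mul] at hm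
  have hA : D ^ 2 + N * B * W ^ 2 + 2 * B * D * W = 4 * q ^ 2 * N ^ m := by
    rw [hDdef, ← h1, hN]
    ring
  rw [hp, hm, Zsqrtd.ext_iff, Zsqrtd.re_sub, Zsqrtd.im_sub, Zsqrtd.re_mul, Zsqrtd.im_mul,
    Zsqrtd.re_mul, Zsqrtd.im_mul]
  constructor
  · dsimp only
    ring
  · dsimp only
    linear_combination 8 * B ^ 2 * e ^ 2 * hA

theorem false_of_large {N B q W C e : ℤ} {n : ℕ} (hn : 1 ≤ n) (hN : N = 4 * q ^ 2 + B)
    (hB : 0 < B) (hBodd : Odd B) (hW : Odd W) (hcop : IsCoprime q N)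
    (h1 : 4 * q ^ 2 * C ^ 2 + B * W ^ 2 = N ^ (2 * n + 1))
    (h2 : N * C ^ 2 - B * (C + W) ^ 2 = 1)
    (hD : 4 * q ^ 2 * C - B * W = 2 * q + N * e) (hlarge : 8192 ≤ N) : False := by
  have hNodd : Odd N := by
    rw [hN]
    exact Even.add_odd ⟨2 * q ^ 2, by ring⟩ hBodd
  have heodd : Odd e := by
    have : Odd (N * e) := by
      have : N * e = 2 * (2 * q ^ 2 * C - q) - B * W := by linear_combination -hD
      rw [this]
      exact (even_two_mul _).sub_odd (hBodd.mul hW)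
    exact (Int.odd_mul.mp this).2
  have he0 : e ≠ 0 := by
    rintro rfl
    simp at heodd
  have hDsq : (2 * q + N * e) ^ 2 + 4 * q ^ 2 * (B * (C + W) ^ 2) = N ^ (2 * n + 2) := by
    rw [← hD, pow_succ N, ← h1, hN]
    ring
  have heW : e * (N * e + 4 * q) = B * W ^ 2 := by
    have hN0 : N ≠ 0 := by omega
    apply mul_left_cancel₀ hN0
    rw [pow_succ N, ← h1] at hDsq
    linear_combination hDsq + 4 * q ^ 2 * h2
  have c2 : IsCoprime 2 N := Int.isCoprime_two_left.mpr hNodd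
  have cB : IsCoprime B N := by
    have : B = N * 1 + -(2 * 2 * q * q) := by rw [hN]; ring
    rw [this]
    exact ((((c2.mul_left c2).mul_left hcop).mul_left hcop).neg_left).mul_add_left_left 1
  have cW : IsCoprime W N := by
    refine ⟨-2 * B * (C + W), N ^ (2 * n), ?_⟩
    rw [← pow_succ, ← h1]
    subst hN
    linear_combination h2
  have ce : IsCoprime e N := by
    have : IsCoprime (e * (N * e + 4 * q)) N := by
      rw [heW]
      exact cB.mul_left (cW.pow_left)
    exact this.of_mul_left_left
  set s := √(B : ℝ) with hs
  set t := √(N : ℝ) with ht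
  have hBr : (0 : ℝ) < B := by exact_mod_cast hB
  have hNr : (8192 : ℝ) ≤ N := by exact_mod_cast hlarge
  have hs2 : s ^ 2 = B := Real.sq_sqrt hBr.le
  have ht2 : t ^ 2 = N := Real.sq_sqrt (by linarith)
  have hs0 : 0 < s := Real.sqrt_pos.mpr hBr
  have hst : s ≤ t := by
    apply Real.sqrt_le_sqrt
    have : B ≤ N := by rw [hN]; nlinarith [sq_nonneg q]
    exact_mod_cast this
  have ht0 : 0 < t := hs0.trans_le hst
  have hab : (s - t) / 2 ≠ (s + t) / 2 := fun h => ht0.ne' (by linarith)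
  have hsum : (s - t) / 2 + (s + t) / 2 = s := by ring
  have hdiff : (s + t) / 2 - (s - t) / 2 = t := by ring
  have her : (e : ℝ) ≠ 0 := by exact_mod_cast he0
  have hxy : s * W + t * e ≠ s * W - t * e := by
    intro h
    have : t * e = 0 := by linarith
    exact (mul_ne_zero ht0.ne' her) this
  obtain ⟨k, hk, hkF⟩ : ∃ k, (k = 2 * n ∨ k = 2 * n + 1) ∧
      padePoly k ((s - t) / 2) ((s + t) / 2) * (s * W + t * e) -
      padePoly k ((s + t) / 2) ((s - t) / 2) * (s * W - t * e) ≠ 0 := by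
    by_cases h : padePoly (2 * n) ((s - t) / 2) ((s + t) / 2) * (s * W + t * e) -
      padePoly (2 * n) ((s + t) / 2) ((s - t) / 2) * (s * W - t * e) = 0
    · exact ⟨_, Or.inr rfl, padePoly_mul_sub_ne_zero hab hxy _ h⟩
    · exact ⟨_, Or.inl rfl, h⟩
  obtain ⟨H, hF, hde⟩ := exists_int_padePoly_mul_sub (B := B) (c := -q ^ 2) hab
    (by rw [hsum]; exact hs0.ne') (by rw [hsum, hs2]) (by
      push_cast
      have : (N : ℝ) = 4 * q ^ 2 + B := by exact_mod_cast hN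
      linear_combination (hs2 - ht2 - this) / 4) hW heodd (by
      rw [← heW]
      exact dvd_mul_right _ _) k
  rw [hsum, hdiff] at hF
  have hH : H ≠ 0 := by
    rintro rfl
    rw [hF] at hkF
    simp at hkF
  have hkm : k ≤ 2 * n + 1 := by omega
  have hd := pow_dvd_of_lift hs2 ht2 hs0.ne' ht0.ne' k c2 cB hF
    (pow_dvd_im_padePoly_mul k c2 cB cW ⟨N ^ (2 * n + 1 - k) * (32 * B ^ 2 * e ^ 2 * q ^ 2), by
      rw [Zsqrtd.quartic_relation hN h1 heW hD, ← mul_assoc (N ^ k), ← pow_add,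
        Nat.add_sub_cancel' hkm]⟩)
  have hmain := four_pow_mul_pow_le hs2 ht2 hs0 hst he0 hH k heW hF ce hd hde
  have hlt := lt_four_pow_mul_pow hNr hn hk
  have hq : 12 * |(q : ℝ)| ≤ N := by
    have h4 : 4 * |(q : ℝ)| ^ 2 ≤ N := by
      rw [sq_abs]
      have : (N : ℝ) = 4 * q ^ 2 + B := by exact_mod_cast hN
      linarith
    by_contra! h
    nlinarith [abs_nonneg (q : ℝ)]
  have hNpos : (0 : ℝ) < N := by linarith
  have heb : N * |(e : ℝ)| ≤ N ^ (n + 1) + 2 * |(q : ℝ)| := by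
    have h5 : |2 * (q : ℝ) + N * e| ≤ N ^ (n + 1) := by
      apply abs_le_of_sq_le_sq _ (by positivity)
      have : (2 * q + N * e) ^ 2 ≤ (N ^ (n + 1)) ^ 2 := by
        rw [← pow_mul, add_mul, one_mul, mul_comm n 2, ← hDsq]
        have : 0 ≤ 4 * q ^ 2 * (B * (C + W) ^ 2) := by positivity
        linarith
      exact_mod_cast this
    have h6 : N * |(e : ℝ)| = |(2 * (q : ℝ) + N * e) - 2 * q| := by
      rw [show (2 * (q : ℝ) + N * e) - 2 * q = N * e by ring, abs_mul, abs_of_pos hNpos]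
    have h7 := abs_sub (2 * (q : ℝ) + N * e) (2 * q)
    rw [abs_mul 2, abs_two] at h7
    linarith
  have hlt' := mul_lt_mul_of_pos_right hlt hNpos
  have : (padeX k).eval 1 ^ 2 * (N * |(e : ℝ)| + 4 * |(q : ℝ)|) ≤
      (padeX k).eval 1 ^ 2 * ((N ^ n + 1 / 2) * N) := by
    gcongr
    rw [pow_succ] at heb
    linarith
  linarith

/-- Multiplication in `(ℤ / ℓ)[√b]` on representatives. -/
def sqrtMulMod (ℓ b : ℕ) (x y : ℕ × ℕ) : ℕ × ℕ :=
  ((x.1 * y.1 + b * (x.2 * y.2)) % ℓ, (x.1 * y.2 + x.2 * y.1) % ℓ)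

/-- The orbit of `cur` under multiplication by `u` reaches `start` without ever having
real part `c`. -/
def orbitAvoids (ℓ b c : ℕ) (u start : ℕ × ℕ) : ℕ → ℕ × ℕ → Bool
  | 0, _ => false
  | fuel + 1, cur => cur.1 != c &&
      (sqrtMulMod ℓ b cur u == start || orbitAvoids ℓ b c u start fuel (sqrtMulMod ℓ b cur u))

/-- A local obstruction modulo `ℓ` to `re ((2 q + √(-B)) ^ (4 j + 3)) = 2 q`. -/
def localObstruction (q B ℓ : ℕ) : Bool :=
  let b := (ℓ - 1) * B % ℓ
  let x := (2 * q % ℓ, 1 % ℓ)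
  let x2 := sqrtMulMod ℓ b x x
  let x3 := sqrtMulMod ℓ b x2 x
  0 < ℓ && orbitAvoids ℓ b (2 * q % ℓ) (sqrtMulMod ℓ b x2 x2) x3 420 x3

/-- For odd `N < 8192`, a certificate that `N` is not a prime power. -/
def hasTwoPrimeFactors (N : ℕ) : Bool :=
  [3, 5, 7, 11, 13, 17, 19, 23, 29, 31, 37, 41, 43, 47, 53, 59, 61, 67, 71, 73, 79, 83, 89].any
    fun d => N % d == 0 && d ^ 13 % N != 0

/-- A certificate that `N` is not a prime power, or that every admissible `q` with
`4 * q ^ 2 < N` has a local obstruction. -/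
def obstructionCheck (N : ℕ) : Bool :=
  hasTwoPrimeFactors N ||
    [3, 5, 7, 11, 13, 17, 19, 23, 29, 31, 37, 41, 43].all fun q =>
      N ≤ 4 * q ^ 2 || N % q == 0 ||
        [16, 5, 13, 17, 29, 41, 37, 53, 61, 73, 89, 97, 101, 109, 113].any
          (localObstruction q (N - 4 * q ^ 2))

theorem obstructionCheck_eq_true :
    ∀ i < 64, ∀ j < 64, obstructionCheck (2 * (64 * i + j) + 1) = true := by
  decide +kernel

theorem exists_iterate_eq_of_orbitAvoids {ℓ b c : ℕ} {u start : ℕ × ℕ} (fuel : ℕ) :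
    ∀ cur : ℕ × ℕ, orbitAvoids ℓ b c u start fuel cur = true →
      ∃ n, (∀ k ≤ n, ((fun x => sqrtMulMod ℓ b x u)^[k] cur).1 ≠ c) ∧
        (fun x => sqrtMulMod ℓ b x u)^[n + 1] cur = start := by
  induction fuel with
  | zero => intro cur h; simp [orbitAvoids] at h
  | succ fuel ih =>
    intro cur h
    simp only [orbitAvoids, Bool.and_eq_true, bne_iff_ne, Bool.or_eq_true, beq_iff_eq] at h
    obtain ⟨h1, h2 | h2⟩ := h
    · refine ⟨0, ?_, by simpa using h2⟩
      intro k hk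
      obtain rfl : k = 0 := by omega
      simpa using h1
    · obtain ⟨n, hn, hn'⟩ := ih _ h2
      refine ⟨n + 1, ?_, by rw [Function.iterate_succ_apply]; exact hn'⟩
      intro k hk
      cases k with
      | zero => simpa using h1
      | succ k => rw [Function.iterate_succ_apply]; exact hn k (by omega)

theorem iterate_fst_ne_of_orbitAvoids {ℓ b c : ℕ} {u start : ℕ × ℕ} {fuel : ℕ}
    (h : orbitAvoids ℓ b c u start fuel start = true) (k : ℕ) :
    ((fun x => sqrtMulMod ℓ b x u)^[k] start).1 ≠ c := by
  obtain ⟨n, hn, hper⟩ := exists_iterate_eq_of_orbitAvoids fuel start h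
  have hper' : Function.IsPeriodicPt (fun x => sqrtMulMod ℓ b x u) (n + 1) start := hper
  rw [← hper'.iterate_mod_apply k]
  exact hn _ (Nat.le_of_lt_succ (Nat.mod_lt k (Nat.succ_pos n)))

/-- `x` is a reduced representative of `a` modulo `ℓ`. -/
def IsRepr {d : ℤ} (ℓ : ℕ) (x : ℕ × ℕ) (a : ℤ√d) : Prop :=
  x.1 < ℓ ∧ (x.1 : ZMod ℓ) = a.re ∧ (x.2 : ZMod ℓ) = a.im

theorem IsRepr.mul {d : ℤ} {ℓ b : ℕ} (hℓ : 0 < ℓ) (hb : (b : ZMod ℓ) = d) {x y : ℕ × ℕ}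
    {a a' : ℤ√d} (hx : IsRepr ℓ x a) (hy : IsRepr ℓ y a') :
    IsRepr ℓ (sqrtMulMod ℓ b x y) (a * a') := by
  refine ⟨Nat.mod_lt _ hℓ, ?_, ?_⟩
  · simp only [sqrtMulMod, ZMod.natCast_mod, Zsqrtd.re_mul]
    push_cast
    rw [hx.2.1, hx.2.2, hy.2.1, hy.2.2, hb]
    ring
  · simp only [sqrtMulMod, ZMod.natCast_mod, Zsqrtd.im_mul]
    push_cast
    rw [hx.2.1, hx.2.2, hy.2.1, hy.2.2]

theorem re_pow_ne_of_localObstruction {q B ℓ : ℕ} (h : localObstruction q B ℓ = true) (j : ℕ) :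
    ((⟨2 * q, 1⟩ : ℤ√(-(B : ℤ))) ^ (4 * j + 3)).re ≠ 2 * q := by
  simp only [localObstruction, Bool.and_eq_true, decide_eq_true_eq] at h
  obtain ⟨hℓ, h⟩ := h
  set b := (ℓ - 1) * B % ℓ with hbdef
  have hb : (b : ZMod ℓ) = ((-(B : ℤ) : ℤ) : ZMod ℓ) := by
    rw [hbdef, ZMod.natCast_mod]
    push_cast [Nat.cast_sub (Nat.one_le_iff_ne_zero.2 hℓ.ne')]
    simp
  have hx : IsRepr ℓ (2 * q % ℓ, 1 % ℓ) (⟨2 * q, 1⟩ : ℤ√(-(B : ℤ))) := by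
    refine ⟨Nat.mod_lt _ hℓ, ?_, ?_⟩
    · simp only [ZMod.natCast_mod]; push_cast; rfl
    · simp only [ZMod.natCast_mod]; push_cast; rfl
  have hx2 := hx.mul hℓ hb hx
  have hx3 := hx2.mul hℓ hb hx
  have hx4 := hx2.mul hℓ hb hx2
  have key : ∀ k, IsRepr ℓ ((fun x => sqrtMulMod ℓ b x (sqrtMulMod ℓ b
      (sqrtMulMod ℓ b (2 * q % ℓ, 1 % ℓ) (2 * q % ℓ, 1 % ℓ))
      (sqrtMulMod ℓ b (2 * q % ℓ, 1 % ℓ) (2 * q % ℓ, 1 % ℓ))))^[k]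
        (sqrtMulMod ℓ b (sqrtMulMod ℓ b (2 * q % ℓ, 1 % ℓ) (2 * q % ℓ, 1 % ℓ))
          (2 * q % ℓ, 1 % ℓ))) ((⟨2 * q, 1⟩ : ℤ√(-(B : ℤ))) ^ (4 * k + 3)) := by
    intro k
    induction k with
    | zero =>
      rw [show (⟨2 * q, 1⟩ : ℤ√(-(B : ℤ))) ^ (4 * 0 + 3) = ⟨2 * q, 1⟩ * ⟨2 * q, 1⟩ * ⟨2 * q, 1⟩ by
        rw [mul_zero, zero_add, pow_succ, pow_two]]
      exact hx3
    | succ k ih =>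
      rw [Function.iterate_succ_apply', show (⟨2 * q, 1⟩ : ℤ√(-(B : ℤ))) ^ (4 * (k + 1) + 3) =
        ⟨2 * q, 1⟩ ^ (4 * k + 3) * (⟨2 * q, 1⟩ * ⟨2 * q, 1⟩ * (⟨2 * q, 1⟩ * ⟨2 * q, 1⟩)) by ring]
      exact ih.mul hℓ hb hx4
  intro hre
  apply iterate_fst_ne_of_orbitAvoids h j
  obtain ⟨h1, h2, -⟩ := key j
  rw [hre] at h2
  have h3 := (ZMod.natCast_eq_natCast_iff' _ (2 * q) ℓ).1 (by rw [h2]; push_cast; rfl)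
  rwa [Nat.mod_eq_of_lt h1] at h3

theorem hasTwoPrimeFactors_prime_pow {p z : ℕ} (hp : p.Prime) (hz : p ^ z < 8192) :
    hasTwoPrimeFactors (p ^ z) = false := by
  have hz13 : z < 13 := by
    have := (Nat.pow_le_pow_left hp.two_le z).trans_lt hz
    by_contra hcon
    have := Nat.pow_le_pow_right (show 0 < 2 by norm_num) (not_lt.1 hcon)
    omega
  rw [hasTwoPrimeFactors, List.any_eq_false]
  intro d hd
  simp only [Bool.and_eq_true, beq_iff_eq, bne_iff_ne, not_and, not_not]
  intro hdvd
  obtain ⟨i, -, rfl⟩ := (Nat.dvd_prime_pow hp).1 (Nat.dvd_of_mod_eq_zero hdvd)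
  apply Nat.mod_eq_zero_of_dvd
  rw [← pow_mul]
  apply pow_dvd_pow
  rcases Nat.eq_zero_or_pos i with rfl | hi
  · simp at hd
  · nlinarith

theorem re_pow_ne_of_small {p z q B : ℕ} (hp : p.Prime) (hpodd : Odd p) (hq : q.Prime)
    (hqodd : Odd q) (hpq : p ≠ q) (hB : 0 < B) (hN : 4 * q ^ 2 + B = p ^ z)
    (hsmall : p ^ z < 8192) (j : ℕ) :
    ((⟨2 * q, 1⟩ : ℤ√(-(B : ℤ))) ^ (4 * j + 3)).re ≠ 2 * q := by
  obtain ⟨i, hi⟩ : Odd (p ^ z) := hpodd.pow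
  have hcheck := obstructionCheck_eq_true (i / 64) (by omega) (i % 64) (by omega)
  rw [Nat.div_add_mod, ← hi, obstructionCheck, hasTwoPrimeFactors_prime_pow hp hsmall,
    Bool.false_or, List.all_eq_true] at hcheck
  have hq46 : q < 46 := by nlinarith
  have hmem : q ∈ [3, 5, 7, 11, 13, 17, 19, 23, 29, 31, 37, 41, 43] := by
    interval_cases q <;> first | decide | (exfalso; revert hq; decide) |
      (exfalso; revert hqodd; decide)
  have hndvd : p ^ z % q ≠ 0 := fun h =>
    hpq (((Nat.prime_dvd_prime_iff_eq hq hp).1 (hq.dvd_of_dvd_pow (Nat.dvd_of_mod_eq_zero h))).symm)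
  have h := hcheck q hmem
  simp only [Bool.or_eq_true, decide_eq_true_eq, beq_iff_eq, hndvd, or_false] at h
  rcases h with h | h
  · omega
  · obtain ⟨ℓ, -, hℓ⟩ := List.any_eq_true.1 h
    have hB' : p ^ z - 4 * q ^ 2 = B := by omega
    rw [hB'] at hℓ
    exact re_pow_ne_of_localObstruction hℓ j

theorem Zsqrtd.add_star_eq_two_mul_re {d : ℤ} (z : ℤ√d) : z + star z = ((2 * z.re : ℤ) : ℤ√d) := by
  ext <;> simp [two_mul]

theorem Zsqrtd.re_dvd_re_pow {d : ℤ} (z : ℤ√d) {n : ℕ} (hn : Odd n) : z.re ∣ (z ^ n).re := by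
  have h := hn.add_dvd_pow_add_pow z (star z)
  rw [← star_pow, Zsqrtd.add_star_eq_two_mul_re, Zsqrtd.add_star_eq_two_mul_re,
    Zsqrtd.intCast_dvd_intCast] at h
  exact Int.dvd_of_mul_dvd_mul_left two_ne_zero h

theorem pow_gcd_add_pow_gcd_eq_zero {R : Type*} [CommRing R] {a b c : R} (h : a * b * c = 1)
    {m n : ℕ} (hm : Odd m) (hn : Odd n) (h1 : a ^ m + b ^ m = 0) (h2 : a ^ n + b ^ n = 0) :
    a ^ m.gcd n + b ^ m.gcd n = 0 := by
  have key : ∀ {k : ℕ}, Odd k → a ^ k + b ^ k = 0 → (-(c * a ^ 2)) ^ k = 1 := by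
    intro k hk hab
    have h3 : (a * b * c) ^ k = 1 := by rw [h, one_pow]
    rw [hk.neg_pow, mul_pow, ← pow_mul, mul_comm 2 k, pow_mul]
    rw [mul_pow, mul_pow] at h3
    linear_combination h3 - c ^ k * a ^ k * hab
  have hg : Odd (m.gcd n) := Odd.of_dvd_nat hm (Nat.gcd_dvd_left m n)
  have h3 := pow_gcd_eq_one.2 ⟨key hm h1, key hn h2⟩
  have h4 : (a * b * c) ^ m.gcd n = 1 := by rw [h, one_pow]
  rw [hg.neg_pow, mul_pow, ← pow_mul, mul_comm 2, pow_mul] at h3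
  rw [mul_pow, mul_pow] at h4
  linear_combination (-b ^ m.gcd n) * h3 - a ^ m.gcd n * h4

theorem Zsqrtd.dvd_re_pow_gcd {d q : ℤ} (hq : Prime q) (hq2 : ¬ q ∣ 2) {z : ℤ√d}
    (hz : IsCoprime q z.norm) {m n : ℕ} (hm : Odd m) (hn : Odd n) (h1 : q ∣ (z ^ m).re)
    (h2 : q ∣ (z ^ n).re) : q ∣ (z ^ m.gcd n).re := by
  let π := Ideal.Quotient.mk (Ideal.span {(q : ℤ√d)})
  have hπ : ∀ k : ℕ, q ∣ 2 * (z ^ k).re ↔ π z ^ k + π (star z) ^ k = 0 := by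
    intro k
    rw [← map_pow, ← map_pow, ← map_add, Ideal.Quotient.eq_zero_iff_mem,
      Ideal.mem_span_singleton, ← star_pow, Zsqrtd.add_star_eq_two_mul_re,
      Zsqrtd.intCast_dvd_intCast]
  obtain ⟨u, v, huv⟩ := hz
  have hunit : π z * π (star z) * π (v : ℤ√d) = 1 := by
    rw [← map_mul, ← map_mul, ← map_one π, Ideal.Quotient.eq, Ideal.mem_span_singleton,
      ← Zsqrtd.norm_eq_mul_conj]
    refine ⟨((-u : ℤ) : ℤ√d), ?_⟩
    have : ((u * q + v * z.norm : ℤ) : ℤ√d) = 1 := by rw [huv]; simp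
    push_cast at this ⊢
    linear_combination this
  have h := (hπ _).2 (pow_gcd_add_pow_gcd_eq_zero hunit hm hn ((hπ m).1 (h1.mul_left 2))
    ((hπ n).1 (h2.mul_left 2)))
  exact (hq.dvd_or_dvd h).resolve_left hq2

/-- Parities of the coordinates of powers of an element with even real part and odd norm. -/
theorem Zsqrtd.even_re_odd_im_pow {d : ℤ} (hd : Odd d) {z : ℤ√d} (hre : Even z.re)
    (him : Odd z.im) (k : ℕ) :
    (Odd (z ^ (2 * k)).re ∧ Even (z ^ (2 * k)).im) ∧
      (Even (z ^ (2 * k + 1)).re ∧ Odd (z ^ (2 * k + 1)).im) := by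
  have key : ∀ w : ℤ√d, Odd w.re → Even w.im → Even (w * z).re ∧ Odd (w * z).im := by
    intro w h1 h2
    rw [Zsqrtd.re_mul, Zsqrtd.im_mul]
    exact ⟨(hre.mul_left _).add (by rw [mul_assoc]; exact (h2.mul_right _).mul_left d),
      (h1.mul him).add_even (h2.mul_right _)⟩
  induction k with
  | zero => simpa using ⟨hre, him⟩
  | succ k ih =>
    obtain ⟨-, h1, h2⟩ := ih
    have h3 : Odd (z ^ (2 * (k + 1))).re ∧ Even (z ^ (2 * (k + 1))).im := by
      rw [show 2 * (k + 1) = 2 * k + 1 + 1 by ring, pow_succ, Zsqrtd.re_mul, Zsqrtd.im_mul]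
      exact ⟨(h1.mul_right _).add_odd ((hd.mul h2).mul him), (h1.mul_right _).add (hre.mul_left _)⟩
    exact ⟨h3, by rw [pow_succ]; exact key _ h3.1 h3.2⟩

theorem Zsqrtd.odd_re_even_im_pow {d : ℤ} {z : ℤ√d} (hre : Odd z.re) (him : Even z.im) (k : ℕ) :
    Odd (z ^ k).re ∧ Even (z ^ k).im := by
  induction k with
  | zero => simp
  | succ k ih =>
    rw [pow_succ, Zsqrtd.re_mul, Zsqrtd.im_mul]
    exact ⟨(ih.1.mul hre).add_even (him.mul_left _),
      (him.mul_left _).add (ih.2.mul_right _)⟩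

theorem Zsqrtd.pow_eq_rescale {d B m r : ℤ} (hB : B = d * m ^ 2) (n : ℕ) :
    (⟨r, m⟩ : ℤ√d) ^ n = ⟨((⟨r, 1⟩ : ℤ√B) ^ n).re, m * ((⟨r, 1⟩ : ℤ√B) ^ n).im⟩ := by
  induction n with
  | zero => ext <;> simp
  | succ n ih =>
    rw [pow_succ, ih, pow_succ]
    ext
    · simp only [Zsqrtd.re_mul]; rw [hB]; ring
    · simp only [Zsqrtd.im_mul]; ring

theorem Zsqrtd.norm_pow {d : ℤ} (z : ℤ√d) (n : ℕ) : (z ^ n).norm = z.norm ^ n :=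
  map_pow Zsqrtd.normMonoidHom z n

theorem exists_mul_eq_of_norm_eq_pow {d : ℤ} {p : ℕ} (hp : Prime (p : ℤ)) (hp2 : ¬ (p : ℤ) ∣ 2)
    {α β : ℤ√d} {a b : ℕ} (ha : 0 < a) (hab : a ≤ b) (hα : α.norm = (p : ℤ) ^ a)
    (hβ : β.norm = (p : ℤ) ^ b) (hα' : ¬ (p : ℤ) ∣ α.re) (hβ' : ¬ (p : ℤ) ∣ β.re) :
    ∃ γ, (β = γ * α ∨ β = γ * star α) ∧ γ.norm = (p : ℤ) ^ (b - a) ∧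
      (a < b → ¬ (p : ℤ) ∣ γ.re) := by
  have hp0 : (p : ℤ) ≠ 0 := hp.ne_zero
  have key : ∀ α : ℤ√d, α.norm = (p : ℤ) ^ a → ¬ (p : ℤ) ∣ α.re →
      (p : ℤ) ^ a ∣ (β * star α).im →
      ∃ γ, β = γ * α ∧ γ.norm = (p : ℤ) ^ (b - a) ∧ (a < b → ¬ (p : ℤ) ∣ γ.re) := by
    intro α hα hα' him
    have hnorm : (β * star α).norm = (p : ℤ) ^ (a + b) := by
      rw [Zsqrtd.norm_mul, Zsqrtd.norm_conj, hα, hβ]; ring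
    have hre : (p : ℤ) ^ a ∣ (β * star α).re := by
      rw [← Int.pow_dvd_pow_iff two_ne_zero]
      have h1 : (β * star α).re ^ 2 = (p : ℤ) ^ (a + b) + d * (β * star α).im ^ 2 := by
        rw [← hnorm, Zsqrtd.norm_def]; ring
      rw [h1]
      refine dvd_add ?_ ((pow_dvd_pow_of_dvd him 2).mul_left d)
      rw [← pow_mul]
      exact pow_dvd_pow _ (by omega)
    obtain ⟨u, hu⟩ := hre
    obtain ⟨v, hv⟩ := him
    have hpa : (((p : ℤ) ^ a : ℤ) : ℤ√d) ≠ 0 := by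
      intro h0
      have := congrArg Zsqrtd.re h0
      rw [Zsqrtd.re_intCast] at this
      exact pow_ne_zero a hp0 this
    have h2 : β * star α = (((p : ℤ) ^ a : ℤ) : ℤ√d) * ⟨u, v⟩ := by
      rw [Zsqrtd.smul_val]; ext <;> simp [hu, hv]
    have h3 : α * star α = (((p : ℤ) ^ a : ℤ) : ℤ√d) := by
      rw [← Zsqrtd.norm_eq_mul_conj, hα]
    have hβγ : β = (⟨u, v⟩ : ℤ√d) * α := by
      ext
      · apply mul_left_cancel₀ (pow_ne_zero a hp0)
        have h4 : (((p : ℤ) ^ a : ℤ) : ℤ√d) * β = (((p : ℤ) ^ a : ℤ) : ℤ√d) * (⟨u, v⟩ * α) := by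
          linear_combination α * h2 - β * h3
        have := congrArg Zsqrtd.re h4
        rwa [Zsqrtd.re_smul, Zsqrtd.re_smul] at this
      · apply mul_left_cancel₀ (pow_ne_zero a hp0)
        have h4 : (((p : ℤ) ^ a : ℤ) : ℤ√d) * β = (((p : ℤ) ^ a : ℤ) : ℤ√d) * (⟨u, v⟩ * α) := by
          linear_combination α * h2 - β * h3
        have := congrArg Zsqrtd.im h4
        rwa [Zsqrtd.im_smul, Zsqrtd.im_smul] at this
    have hγ : (⟨u, v⟩ : ℤ√d).norm = (p : ℤ) ^ (b - a) := by
      apply mul_right_cancel₀ (pow_ne_zero a hp0)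
      rw [← pow_add, Nat.sub_add_cancel hab, ← hβ, hβγ, Zsqrtd.norm_mul, hα]
    refine ⟨⟨u, v⟩, hβγ, hγ, ?_⟩
    intro hlt hu'
    change (p : ℤ) ∣ u at hu'
    apply hβ'
    have h5 : (p : ℤ) ∣ d * v := by
      have h6 : (p : ℤ) ∣ d * v ^ 2 := by
        have h7 : d * v ^ 2 = u ^ 2 - (p : ℤ) ^ (b - a) := by
          rw [← hγ, Zsqrtd.norm_def]; ring
        rw [h7]
        exact dvd_sub (hu'.pow two_ne_zero) (dvd_pow_self _ (by omega))
      rcases hp.dvd_or_dvd h6 with h | h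
      · exact h.mul_right v
      · exact (hp.dvd_of_dvd_pow h).mul_left d
    rw [hβγ, Zsqrtd.re_mul]
    exact dvd_add (hu'.mul_right _) (h5.mul_right _)
  have hprod : (p : ℤ) ^ a ∣ (β * star α).im * (β * star (star α)).im := by
    have h1 : (β * star α).im * (β * star (star α)).im =
        β.im ^ 2 * (p : ℤ) ^ a - α.im ^ 2 * (p : ℤ) ^ b := by
      rw [← hα, ← hβ, Zsqrtd.norm_def, Zsqrtd.norm_def, star_star]
      simp only [Zsqrtd.im_mul, Zsqrtd.re_star, Zsqrtd.im_star]
      ring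
    rw [h1]
    exact dvd_sub (dvd_mul_left _ _) ((pow_dvd_pow _ hab).mul_left _)
  have hαim : ¬ (p : ℤ) ∣ α.im := by
    intro h
    apply hα'
    have h1 : α.re ^ 2 = (p : ℤ) ^ a + d * α.im ^ 2 := by rw [← hα, Zsqrtd.norm_def]; ring
    exact hp.dvd_of_dvd_pow (n := 2) (h1 ▸ dvd_add (dvd_pow_self _ ha.ne')
      ((h.pow two_ne_zero).mul_left d))
  have hnot : ¬ ((p : ℤ) ∣ (β * star α).im ∧ (p : ℤ) ∣ (β * star (star α)).im) := by
    rintro ⟨h1, h2⟩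
    have h3 := dvd_sub h2 h1
    rw [show (β * star (star α)).im - (β * star α).im = 2 * (β.re * α.im) by
      simp only [star_star, Zsqrtd.im_mul, Zsqrtd.re_star, Zsqrtd.im_star]; ring] at h3
    rcases hp.dvd_or_dvd h3 with h | h
    · exact hp2 h
    · exact (hp.dvd_or_dvd h).elim hβ' hαim
  by_cases h : (p : ℤ) ∣ (β * star α).im
  · have h2 : ¬ (p : ℤ) ∣ (β * star (star α)).im := fun h2 => hnot ⟨h, h2⟩
    obtain ⟨γ, h3, h4⟩ := key α hα hα' (hp.pow_dvd_of_dvd_mul_right a h2 hprod)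
    exact ⟨γ, Or.inl h3, h4⟩
  · obtain ⟨γ, h3, h4⟩ := key (star α) (by rw [Zsqrtd.norm_conj, hα]) (by simpa using hα')
      (hp.pow_dvd_of_dvd_mul_left a h hprod)
    exact ⟨γ, Or.inr h3, h4⟩

theorem exists_generator {d : ℤ} {p : ℕ} (hp : Prime (p : ℤ)) (hp2 : ¬ (p : ℤ) ∣ 2)
    (hex : ∃ b, 0 < b ∧ ∃ β : ℤ√d, β.norm = (p : ℤ) ^ b ∧ ¬ (p : ℤ) ∣ β.re) :
    ∃ (α : ℤ√d) (a : ℕ), 0 < a ∧ α.norm = (p : ℤ) ^ a ∧ ¬ (p : ℤ) ∣ α.re ∧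
      ∀ b, 0 < b → ∀ β : ℤ√d, β.norm = (p : ℤ) ^ b → ¬ (p : ℤ) ∣ β.re →
        ∃ ε : ℤ√d, ε.norm = 1 ∧ ∃ n, 0 < n ∧ (β = ε * α ^ n ∨ β = ε * star α ^ n) := by
  classical
  obtain ⟨ha, α, hα, hα'⟩ := Nat.find_spec hex
  have hmin := fun m => @Nat.find_min _ _ hex m
  set a := Nat.find hex
  refine ⟨α, a, ha, hα, hα', ?_⟩
  have hαα : α * star α = (((p : ℤ) ^ a : ℤ) : ℤ√d) := by rw [← Zsqrtd.norm_eq_mul_conj, hα]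
  have hmixed : ∀ (β w : ℤ√d), ¬ (p : ℤ) ∣ β.re → β ≠ w * (α * star α) := by
    intro β w h1 h2
    apply h1
    rw [h2, hαα, mul_comm, Zsqrtd.re_smul]
    exact (dvd_pow_self _ ha.ne').mul_right _
  intro b
  induction b using Nat.strong_induction_on with
  | _ b ih =>
    intro hb β hβ hβ'
    have hab : a ≤ b := by
      by_contra hlt
      exact hmin b (not_le.1 hlt) ⟨hb, β, hβ, hβ'⟩
    obtain ⟨γ, h1, h2, h3⟩ := exists_mul_eq_of_norm_eq_pow hp hp2 ha hab hα hβ hα' hβ'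
    rcases hab.eq_or_lt with h | h
    · refine ⟨γ, by rw [h2, h, Nat.sub_self, pow_zero], 1, one_pos, ?_⟩
      simpa using h1
    · obtain ⟨ε, hε, n, hn, h4⟩ := ih (b - a) (by omega) (by omega) γ h2 (h3 h)
      obtain ⟨k, rfl⟩ : ∃ k, n = k + 1 := ⟨n - 1, by omega⟩
      refine ⟨ε, hε, k + 1 + 1, by omega, ?_⟩
      rcases h1 with h1 | h1 <;> rcases h4 with h4 | h4
      · left; rw [h1, h4]; ring
      · exact (hmixed β (ε * star α ^ k) hβ' (by rw [h1, h4]; ring)).elim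
      · exact (hmixed β (ε * α ^ k) hβ' (by rw [h1, h4]; ring)).elim
      · right; rw [h1, h4]; ring

theorem Zsqrtd.eq_of_norm_eq_one {d : ℤ} (hd : 0 < d) {ε : ℤ√(-d)} (h : ε.norm = 1) :
    (ε = 1 ∨ ε = -1) ∨ d = 1 ∧ ε.re = 0 ∧ (ε.im = 1 ∨ ε.im = -1) := by
  rw [Zsqrtd.norm_def] at h
  have h1 : ε.im ^ 2 ≤ 1 := by nlinarith [sq_nonneg ε.re, sq_nonneg ε.im]
  have h2 : ε.im ≤ 1 := by nlinarith
  have h3 : -1 ≤ ε.im := by nlinarith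
  have h4 : ε.im = 0 ∨ ε.im = 1 ∨ ε.im = -1 := by omega
  rcases h4 with h4 | h4
  · left
    rw [h4] at h
    have h5 : ε.re ^ 2 = 1 := by linarith
    rcases sq_eq_one_iff.1 h5 with h6 | h6
    · left; ext <;> simp [h4, h6]
    · right; ext <;> simp [h4, h6]
  · right
    have h5 : ε.im * ε.im = 1 := by rcases h4 with h4 | h4 <;> rw [h4] <;> norm_num
    have h6 : ε.re * ε.re + d = 1 := by linear_combination h - d * h5
    have h7 : d = 1 := by nlinarith [mul_self_nonneg ε.re]
    exact ⟨h7, mul_self_eq_zero.1 (by linarith), h4⟩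

/-- The two-adic size of `z ^ (2 ^ (j + 1) * o)` for odd `o`, together with that of its norm. -/
theorem exists_im_pow_eq {B q : ℤ} (hB : Odd B) (hq : Odd q) (j i : ℕ) :
    ∃ w : ℤ, Odd w ∧ Odd ((⟨2 * q, 1⟩ : ℤ√(-B)) ^ (2 ^ (j + 1) * (2 * i + 1))).re ∧
      ((⟨2 * q, 1⟩ : ℤ√(-B)) ^ (2 ^ (j + 1) * (2 * i + 1))).im = 2 ^ (j + 2) * w := by
  induction j with
  | zero =>
    have h1 : ∀ k : ℕ, (∃ u : ℤ, Odd u ∧ ((⟨2 * q, 1⟩ : ℤ√(-B)) ^ (2 * k + 1)).re = 2 * u) ∧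
        Odd ((⟨2 * q, 1⟩ : ℤ√(-B)) ^ (2 * k + 1)).im := by
      intro k
      induction k with
      | zero => simpa using hq
      | succ k ih =>
        obtain ⟨⟨u, hu, h1⟩, h2⟩ := ih
        have h3 : (⟨2 * q, 1⟩ : ℤ√(-B)) ^ (2 * (k + 1) + 1) =
            (⟨2 * q, 1⟩ : ℤ√(-B)) ^ (2 * k + 1) * ⟨4 * q ^ 2 - B, 4 * q⟩ := by
          rw [show 2 * (k + 1) + 1 = 2 * k + 1 + 2 by ring, pow_add, pow_two]
          congr 1
          ext <;> simp <;> ring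
        have h4 : Odd (4 * q ^ 2 - B) := Even.sub_odd ⟨2 * q ^ 2, by ring⟩ hB
        rw [h3]
        simp only [Zsqrtd.re_mul, Zsqrtd.im_mul, h1]
        constructor
        · refine ⟨u * (4 * q ^ 2 - B) - 2 * (B * ((⟨2 * q, 1⟩ : ℤ√(-B)) ^ (2 * k + 1)).im * q),
            (hu.mul h4).sub_even (even_two_mul _), by ring⟩
        · exact Even.add_odd ⟨2 * u * (2 * q), by ring⟩ (h2.mul h4)
    obtain ⟨⟨u, hu, h2⟩, h3⟩ := h1 i
    refine ⟨u * ((⟨2 * q, 1⟩ : ℤ√(-B)) ^ (2 * i + 1)).im, hu.mul h3, ?_, ?_⟩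
    · rw [zero_add, pow_one, mul_comm 2 (2 * i + 1), pow_mul, pow_two, Zsqrtd.re_mul, h2]
      exact Even.add_odd ⟨u * (2 * u), by ring⟩ ((hB.neg.mul h3).mul h3)
    · rw [zero_add, pow_one, mul_comm 2 (2 * i + 1), pow_mul, pow_two, Zsqrtd.im_mul, h2]
      ring
  | succ j ih =>
    obtain ⟨w, hw, h1, h2⟩ := ih
    have h3 : 2 ^ (j + 1 + 1) * (2 * i + 1) = 2 ^ (j + 1) * (2 * i + 1) * 2 := by ring
    refine ⟨((⟨2 * q, 1⟩ : ℤ√(-B)) ^ (2 ^ (j + 1) * (2 * i + 1))).re * w, h1.mul hw, ?_, ?_⟩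
    · rw [h3, pow_mul, pow_two, Zsqrtd.re_mul]
      refine (h1.mul h1).add_even ?_
      rw [h2]
      exact ⟨-B * (2 ^ (j + 1) * w) * (2 ^ (j + 2) * w), by ring⟩
    · rw [h3, pow_mul, pow_two, Zsqrtd.im_mul, h2]
      ring

theorem two_pow_dvd_pow_sub_one {N : ℤ} (hN : Odd N) (j o : ℕ) :
    (2 : ℤ) ^ (j + 3) ∣ N ^ (2 ^ (j + 1) * o) - 1 := by
  have h : ∀ j : ℕ, (2 : ℤ) ^ (j + 3) ∣ N ^ 2 ^ (j + 1) - 1 := by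
    intro j
    induction j with
    | zero =>
      norm_num
      exact Int.eight_dvd_sq_sub_one_of_odd hN
    | succ j ih =>
      rw [show N ^ 2 ^ (j + 1 + 1) - 1 = (N ^ 2 ^ (j + 1) - 1) * (N ^ 2 ^ (j + 1) + 1) by ring,
        show j + 1 + 3 = j + 3 + 1 by ring, pow_succ]
      exact mul_dvd_mul ih (hN.pow.add_odd odd_one).two_dvd
  rw [pow_mul]
  exact (h j).trans (sub_one_dvd_pow_sub_one _ _)

theorem re_pow_two_mul_add_one {B q : ℤ} (m : ℕ) {X W : ℤ}
    (h : (⟨2 * q, 1⟩ : ℤ√(-B)) ^ m = ⟨X, W⟩) :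
    ((⟨2 * q, 1⟩ : ℤ√(-B)) ^ (2 * m + 1)).re = 2 * q * (X ^ 2 - B * W ^ 2) - 2 * B * X * W := by
  rw [pow_succ, mul_comm 2 m, pow_mul, h, pow_two]
  simp only [Zsqrtd.re_mul, Zsqrtd.im_mul]
  ring

theorem re_pow_two_mul_add_one_ne {B q : ℤ} (hB : Odd B) (hq : Odd q) {m : ℕ} (hm : Even m)
    (hm0 : 0 < m) : ((⟨2 * q, 1⟩ : ℤ√(-B)) ^ (2 * m + 1)).re ≠ 2 * q := by
  intro hre
  obtain ⟨k, o, ho, hmo⟩ := Nat.exists_eq_two_pow_mul_odd hm0.ne'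
  obtain ⟨i, rfl⟩ := ho
  obtain ⟨j, rfl⟩ : ∃ j, k = j + 1 := by
    refine ⟨k - 1, ?_⟩
    rcases Nat.eq_zero_or_pos k with rfl | hk
    · rw [hmo, pow_zero, one_mul] at hm
      exact absurd hm (by simp)
    · omega
  obtain ⟨w, hw, hX, hW⟩ := exists_im_pow_eq hB hq j i
  rw [← hmo] at hX hW
  have hN : Odd (4 * q ^ 2 + B) := Even.add_odd ⟨2 * q ^ 2, by ring⟩ hB
  have hdvd := two_pow_dvd_pow_sub_one hN j (2 * i + 1)
  rw [← hmo] at hdvd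
  generalize hz : (⟨2 * q, 1⟩ : ℤ√(-B)) ^ m = z at hX hW
  obtain ⟨X, W⟩ := z
  simp only at hX hW
  have hnorm : X ^ 2 + B * W ^ 2 = (4 * q ^ 2 + B) ^ m := by
    have := congrArg Zsqrtd.norm hz
    rw [Zsqrtd.norm_pow, Zsqrtd.norm_def, Zsqrtd.norm_def] at this
    simp only at this
    rw [show 4 * q ^ 2 + B = 2 * q * (2 * q) - -B * 1 * 1 by ring, this]
    ring
  rw [re_pow_two_mul_add_one m hz] at hre
  have h1 : q * ((4 * q ^ 2 + B) ^ m - 1) = B * W * (X + 2 * q * W) := by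
    rw [← hnorm]
    linarith
  have h2 : Odd (B * w * (X + 2 * q * W)) :=
    (hB.mul hw).mul (hX.add_even ⟨q * W, by ring⟩)
  have h3 : (2 : ℤ) ^ (j + 3) ∣ 2 ^ (j + 2) * (B * w * (X + 2 * q * W)) := by
    rw [show 2 ^ (j + 2) * (B * w * (X + 2 * q * W)) = B * W * (X + 2 * q * W) by rw [hW]; ring,
      ← h1]
    exact hdvd.mul_left q
  rw [show j + 3 = j + 2 + 1 by ring, pow_succ] at h3
  have h4 := Int.dvd_of_mul_dvd_mul_left (pow_ne_zero _ two_ne_zero) h3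
  exact (Int.not_even_iff_odd.2 h2) (even_iff_two_dvd.2 h4)

theorem prime_pow_dvd_or_dvd {p : ℕ} (hp : Prime (p : ℤ)) {z : ℕ} {a b : ℤ}
    (hab : ¬ ((p : ℤ) ∣ a ∧ (p : ℤ) ∣ b)) (h : (p : ℤ) ^ z ∣ a * b) :
    (p : ℤ) ^ z ∣ a ∨ (p : ℤ) ^ z ∣ b := by
  by_cases ha : (p : ℤ) ∣ a
  · exact Or.inl (hp.pow_dvd_of_dvd_mul_right z (fun hb => hab ⟨ha, hb⟩) h)
  · exact Or.inr (hp.pow_dvd_of_dvd_mul_left z ha h)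

theorem re_pow_two_mul_add_one_ne_two_mul {p z q B : ℕ} (hp : p.Prime) (hpodd : Odd p)
    (hq : q.Prime) (hqodd : Odd q) (hpq : p ≠ q) (hB : 0 < B) (hBodd : Odd B)
    (hN : 4 * q ^ 2 + B = p ^ z) {m : ℕ} (hm : 0 < m) :
    ((⟨2 * q, 1⟩ : ℤ√(-(B : ℤ))) ^ (2 * m + 1)).re ≠ 2 * q := by
  have hBZ : Odd (B : ℤ) := by exact_mod_cast hBodd
  have hqZ : Odd (q : ℤ) := by exact_mod_cast hqodd
  rcases Nat.even_or_odd m with hme | hmo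
  · exact re_pow_two_mul_add_one_ne hBZ hqZ hme hm
  intro hre
  have hNZ : 4 * (q : ℤ) ^ 2 + B = (p : ℤ) ^ z := by exact_mod_cast hN
  have hpZ : Prime (p : ℤ) := Nat.prime_iff_prime_int.1 hp
  have hq3 : 3 ≤ q := by
    have := hq.two_le
    obtain ⟨k, rfl⟩ := hqodd
    omega
  have hB0 : (0 : ℤ) < B := by exact_mod_cast hB
  have hp2 : ¬ (p : ℤ) ∣ 2 := by
    intro h
    have h2 : p ∣ 2 := by exact_mod_cast h
    have := (Nat.prime_dvd_prime_iff_eq hp Nat.prime_two).1 h2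
    subst this
    revert hpodd; decide
  have hpq' : ¬ (p : ℤ) ∣ q := by
    intro h
    exact hpq ((Nat.prime_dvd_prime_iff_eq hp hq).1 (by exact_mod_cast h))
  obtain ⟨n, hn⟩ := hmo
  have hpar := (Zsqrtd.even_re_odd_im_pow (z := (⟨2 * q, 1⟩ : ℤ√(-(B : ℤ)))) hBZ.neg
    (even_two_mul _) odd_one n).2
  have hdvd := Zsqrtd.re_dvd_re_pow (⟨2 * q, 1⟩ : ℤ√(-(B : ℤ))) (n := m) ⟨n, hn⟩
  rw [← hn] at hpar
  generalize hw : (⟨2 * q, 1⟩ : ℤ√(-(B : ℤ))) ^ m = w at hpar hdvd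
  obtain ⟨X, W⟩ := w
  obtain ⟨-, hW⟩ := hpar
  obtain ⟨C, hC⟩ := hdvd
  simp only at hW hC
  subst hC
  have hnorm : 4 * (q : ℤ) ^ 2 * C ^ 2 + B * W ^ 2 = (4 * q ^ 2 + B) ^ m := by
    have := congrArg Zsqrtd.norm hw
    rw [Zsqrtd.norm_pow, Zsqrtd.norm_def, Zsqrtd.norm_def] at this
    simp only at this
    rw [show 4 * (q : ℤ) ^ 2 + B = 2 * q * (2 * q) - -B * 1 * 1 by ring, this]
    ring
  rw [re_pow_two_mul_add_one m hw] at hre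
  have h2 : 4 * (q : ℤ) ^ 2 * C ^ 2 - 2 * B * C * W - B * W ^ 2 = 1 := by
    have h : (2 * (q : ℤ)) * (4 * (q : ℤ) ^ 2 * C ^ 2 - 2 * B * C * W - B * W ^ 2) =
        2 * q * 1 := by linear_combination hre
    exact mul_left_cancel₀ (by positivity) h
  rcases Nat.eq_zero_or_pos n with rfl | hn0
  · rw [hn, mul_zero, zero_add, pow_one] at hw
    have hX := congrArg Zsqrtd.re hw
    have hW1 := congrArg Zsqrtd.im hw
    simp only at hX hW1
    have hC1 : C = 1 := by
      have h : 2 * (q : ℤ) * C = 2 * q * 1 := by linarith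
      exact mul_left_cancel₀ (by positivity) h
    subst hC1
    subst hW1
    have h3 : (p : ℤ) ^ z ∣ (4 * q - 1) * (4 * q + 1) := ⟨3, by rw [← hNZ]; linarith⟩
    have hlt : 4 * (q : ℤ) + 1 < (p : ℤ) ^ z := by 
      rw [← hNZ]
      nlinarith [(by exact_mod_cast hq3 : (3 : ℤ) ≤ q)]
    rcases prime_pow_dvd_or_dvd hpZ (fun h => hp2 (by
        have := dvd_sub h.2 h.1
        ring_nf at this
        exact this)) h3 with h | h
    · have := Int.le_of_dvd (by linarith [(by exact_mod_cast hq3 : (3 : ℤ) ≤ q)]) h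
      linarith
    · have := Int.le_of_dvd (by positivity) h
      linarith
  · by_cases hsmall : p ^ z < 8192
    · apply re_pow_ne_of_small hp hpodd hq hqodd hpq hB hN hsmall n
      rw [show 4 * n + 3 = 2 * m + 1 by omega, re_pow_two_mul_add_one m hw]
      exact hre
    · have hlarge : (8192 : ℤ) ≤ (p : ℤ) ^ z := by exact_mod_cast not_lt.1 hsmall
      have hcop : IsCoprime (q : ℤ) ((p : ℤ) ^ z) := by
        apply IsCoprime.pow_right
        exact ((Nat.coprime_primes hq hp).2 hpq.symm).isCoprime
      have h5 : (p : ℤ) ^ z ∣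
          (4 * q ^ 2 * C - B * W - 2 * q) * (4 * q ^ 2 * C - B * W + 2 * q) := by
        refine ⟨B * W ^ 2, ?_⟩
        rw [← hNZ]
        linear_combination 4 * (q : ℤ) ^ 2 * h2
      have h4 : ¬ ((p : ℤ) ∣ 4 * q ^ 2 * C - B * W - 2 * q ∧
          (p : ℤ) ∣ 4 * q ^ 2 * C - B * W + 2 * q) := by
        rintro ⟨ha, hb⟩
        have h := dvd_sub hb ha
        rw [show 4 * (q : ℤ) ^ 2 * C - B * W + 2 * q - (4 * q ^ 2 * C - B * W - 2 * q) =
          2 * (2 * q) by ring] at h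
        rcases hpZ.dvd_or_dvd h with h | h
        · exact hp2 h
        · exact (hpZ.dvd_or_dvd h).elim hp2 hpq'
      rw [hNZ, hn] at hnorm
      have h6 : (p : ℤ) ^ z * C ^ 2 - B * (C + W) ^ 2 = 1 := by
        rw [← hNZ]
        linear_combination h2
      rcases prime_pow_dvd_or_dvd hpZ h4 h5 with ⟨e, he⟩ | ⟨e, he⟩
      · exact false_of_large hn0 hNZ.symm hB0 hBZ hW hcop hnorm h6
          (show _ = _ + _ * e by linear_combination he) hlarge
      · exact false_of_large (q := -(q : ℤ)) hn0 (by rw [← hNZ]; ring) hB0 hBZ hW hcop.neg_left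
          (by rw [neg_sq]; exact hnorm) h6
          (show _ = _ + _ * e by linear_combination he) hlarge

theorem two_mul_dvd_iff_of_odd {q a : ℤ} (hq : Odd q) : 2 * q ∣ a ↔ Even a ∧ q ∣ a := by
  have hcop : IsCoprime (2 : ℤ) q := by
    obtain ⟨k, rfl⟩ := hq
    exact ⟨-k, 1, by ring⟩
  rw [even_iff_two_dvd]
  exact ⟨fun h => ⟨(dvd_mul_right _ _).trans h, (dvd_mul_left _ _).trans h⟩,
    fun h => hcop.mul_dvd h.1 h.2⟩

theorem re_pow_prime_ne_neg {q : ℕ} (hq : q ≠ 0) {B : ℤ} {r : ℕ} (hr : r.Prime)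
    (hrodd : Odd r) : ((⟨2 * q, 1⟩ : ℤ√B) ^ r).re ≠ -(2 * q) := by
  intro h
  have hr3 : 3 ≤ r := by
    have := hr.two_le
    obtain ⟨k, rfl⟩ := hrodd
    omega
  have hq0 : 2 * (q : ℤ) ≠ 0 := by simpa using hq
  obtain ⟨w, hw⟩ := exists_add_pow_prime_eq hr (((2 * q : ℤ)) : ℤ√B) Zsqrtd.sqrtd
  have hδ : (((2 * q : ℤ)) : ℤ√B) + Zsqrtd.sqrtd = ⟨2 * q, 1⟩ := by ext <;> simp
  have hsq : (Zsqrtd.sqrtd : ℤ√B) ^ r = ((B ^ (r / 2) : ℤ) : ℤ√B) * Zsqrtd.sqrtd := by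
    conv_lhs => rw [← Nat.two_mul_div_two_add_one_of_odd hrodd]
    rw [pow_succ, pow_mul, pow_two, Zsqrtd.dmuld]
    push_cast
    rfl
  rw [hδ, hsq, ← Int.cast_pow] at hw
  have hre := congrArg Zsqrtd.re hw
  rw [h] at hre
  have hsplit : (r : ℤ√B) * (((2 * q : ℤ)) : ℤ√B) * Zsqrtd.sqrtd * w =
      ((r * (2 * q) : ℤ) : ℤ√B) * (Zsqrtd.sqrtd * w) := by push_cast; ring
  rw [hsplit, Zsqrtd.re_add, Zsqrtd.re_add, Zsqrtd.re_smul, Zsqrtd.re_smul,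
    Zsqrtd.re_intCast] at hre
  simp only [Zsqrtd.re_sqrtd, mul_zero, add_zero] at hre
  obtain ⟨s, hs⟩ : ∃ s, r = s + 1 := ⟨r - 1, by omega⟩
  have h1 : (2 * (q : ℤ)) ^ s + r * (Zsqrtd.sqrtd * w).re = -1 := by
    apply mul_left_cancel₀ hq0
    rw [hs, pow_succ, ← hs] at hre
    linear_combination -hre
  have hrZ : Prime (r : ℤ) := Nat.prime_iff_prime_int.1 hr
  by_cases hdvd : (r : ℤ) ∣ 2 * q
  · have h2 : (r : ℤ) ∣ -1 := by
      rw [← h1]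
      exact dvd_add (hdvd.pow (by omega)) (dvd_mul_right _ _)
    exact hrZ.not_isUnit (isUnit_of_dvd_unit h2 (by simp))
  · have h2 := Int.ModEq.pow_card_sub_one_eq_one hr
      (((Nat.prime_iff_prime_int.1 hr).coprime_iff_not_dvd.2 hdvd).symm)
    rw [hs, Nat.add_sub_cancel, ← hs] at h2
    have h3 := h2.symm.dvd
    have h4 : (r : ℤ) ∣ 2 := by
      have h5 : (2 : ℤ) = -((2 * (q : ℤ)) ^ s - 1) - r * (Zsqrtd.sqrtd * w).re := by
        linear_combination h1
      rw [h5]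
      exact dvd_sub (dvd_neg.2 h3) (dvd_mul_right _ _)
    have := Int.le_of_dvd two_pos h4
    omega

theorem eq_one_of_re_pow_eq {p z q B : ℕ} (hp : p.Prime) (hpodd : Odd p)
    (hq : q.Prime) (hqodd : Odd q) (hpq : p ≠ q) (hB : 0 < B) (hBodd : Odd B)
    (hN : 4 * q ^ 2 + B = p ^ z) {t : ℕ} (ht : Odd t)
    (h : ((⟨2 * q, 1⟩ : ℤ√(-(B : ℤ))) ^ t).re ∣ 2 * q) : t = 1 := by
  by_contra ht1
  have hr := Nat.minFac_prime ht1
  obtain ⟨s, hs⟩ := Nat.minFac_dvd t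
  have hrodd : Odd t.minFac := Odd.of_dvd_nat ht (Nat.minFac_dvd t)
  have hsodd : Odd s := Odd.of_dvd_nat ht ⟨t.minFac, by rw [mul_comm]; exact hs⟩
  set r := t.minFac
  have h1 : ((⟨2 * q, 1⟩ : ℤ√(-(B : ℤ))) ^ r).re ∣ 2 * q := by
    refine (Zsqrtd.re_dvd_re_pow _ hsodd).trans ?_
    rw [← pow_mul, ← hs]
    exact h
  have h2 : 2 * (q : ℤ) ∣ ((⟨2 * q, 1⟩ : ℤ√(-(B : ℤ))) ^ r).re :=
    Zsqrtd.re_dvd_re_pow (⟨2 * q, 1⟩ : ℤ√(-(B : ℤ))) hrodd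
  rcases Int.associated_iff.1 (associated_of_dvd_dvd h1 h2) with h3 | h3
  · obtain ⟨m, hm⟩ := hrodd
    have hm0 : 0 < m := by
      rcases Nat.eq_zero_or_pos m with rfl | h0
      · rw [hm] at hr; exact absurd hr (by norm_num)
      · exact h0
    rw [hm] at h3
    exact re_pow_two_mul_add_one_ne_two_mul hp hpodd hq hqodd hpq hB hBodd hN hm0 h3
  · exact re_pow_prime_ne_neg hq.ne_zero hr hrodd h3

theorem exists_even_generator {d q p : ℕ} (hd : 0 < d) (hdodd : Odd d) (hp : p.Prime)
    (hpodd : Odd p) (hq : q.Prime) (hpq : p ≠ q)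
    (hex : ∃ x y, 0 < y ∧ d * x ^ 2 + 4 * q ^ 2 = p ^ y) :
    ∃ (α : ℤ√(-(d : ℤ))) (a : ℕ), 0 < a ∧ α.norm = (p : ℤ) ^ a ∧ Even α.re ∧ Odd α.im ∧
      ∀ x y, 0 < y → d * x ^ 2 + 4 * q ^ 2 = p ^ y →
        ∃ ε : ℤ√(-(d : ℤ)), ε.norm = 1 ∧ ∃ n, (ε * α ^ n).re = 2 * q ∧ y = a * n := by
  have hpZ : Prime (p : ℤ) := Nat.prime_iff_prime_int.1 hp
  have hp2 : ¬ p ∣ 2 := by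
    intro h
    have := (Nat.prime_dvd_prime_iff_eq hp Nat.prime_two).1 h
    subst this
    revert hpodd; decide
  have hp2q : ¬ (p : ℤ) ∣ 2 * q := by
    intro h
    have h' : p ∣ 2 * q := by exact_mod_cast h
    exact (hp.dvd_mul.1 h').elim hp2 fun h => hpq ((Nat.prime_dvd_prime_iff_eq hp hq).1 h)
  have hsol : ∀ x y : ℕ, d * x ^ 2 + 4 * q ^ 2 = p ^ y →
      (⟨2 * q, x⟩ : ℤ√(-(d : ℤ))).norm = (p : ℤ) ^ y := by
    intro x y h
    have h' : (d : ℤ) * x ^ 2 + 4 * q ^ 2 = (p : ℤ) ^ y := by exact_mod_cast h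
    rw [Zsqrtd.norm_def, ← h']
    ring
  obtain ⟨α, a, ha, hα, -, hgen⟩ := exists_generator (d := -(d : ℤ)) hpZ
    (by exact_mod_cast hp2) (by
      obtain ⟨x, y, hy, h⟩ := hex
      exact ⟨y, hy, _, hsol x y h, hp2q⟩)
  have hsol' : ∀ x y, 0 < y → d * x ^ 2 + 4 * q ^ 2 = p ^ y →
      ∃ ε : ℤ√(-(d : ℤ)), ε.norm = 1 ∧ ∃ n, (ε * α ^ n).re = 2 * q ∧ y = a * n := by
    intro x y hy h
    obtain ⟨ε, hε, n, -, h1⟩ := hgen y hy _ (hsol x y h) hp2q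
    have hnorm : (⟨2 * q, x⟩ : ℤ√(-(d : ℤ))).norm = (p : ℤ) ^ (a * n) := by
      rcases h1 with h1 | h1 <;>
        rw [h1, Zsqrtd.norm_mul, hε, one_mul, Zsqrtd.norm_pow]
      · rw [hα, pow_mul]
      · rw [Zsqrtd.norm_conj, hα, pow_mul]
    have hy' : y = a * n := by
      rw [hsol x y h] at hnorm
      exact Nat.pow_right_injective hp.two_le (by exact_mod_cast hnorm)
    rcases h1 with h1 | h1
    · exact ⟨ε, hε, n, by rw [← h1], hy'⟩
    · refine ⟨star ε, by rw [Zsqrtd.norm_conj, hε], n, ?_, hy'⟩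
      have h2 := congrArg (fun w => (star w).re) h1
      simp only [star_mul', star_pow, star_star, Zsqrtd.re_star] at h2
      exact h2.symm
  have hodd : Odd (α.re ^ 2 + d * α.im ^ 2) := by
    have h1 : α.re ^ 2 + d * α.im ^ 2 = (p : ℤ) ^ a := by rw [← hα, Zsqrtd.norm_def]; ring
    rw [h1]
    exact_mod_cast hpodd.pow
  have hdZ : Odd (d : ℤ) := by exact_mod_cast hdodd
  rcases Int.even_or_odd α.re with hre | hre
  · have him : Odd α.im := by
      by_contra h
      rw [Int.not_odd_iff_even] at h
      exact Int.not_even_iff_odd.2 hodd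
        ((hre.pow_of_ne_zero two_ne_zero).add ((h.pow_of_ne_zero two_ne_zero).mul_left _))
    exact ⟨α, a, ha, hα, hre, him, hsol'⟩
  · have him : Even α.im := by
      by_contra h
      rw [Int.not_even_iff_odd] at h
      exact Int.not_even_iff_odd.2 hodd (hre.pow.add_odd (hdZ.mul h.pow))
    by_cases hd1 : (d : ℤ) = 1
    · have hi : (⟨0, 1⟩ : ℤ√(-(d : ℤ))).norm = 1 := by rw [Zsqrtd.norm_def]; linarith
      refine ⟨⟨0, 1⟩ * α, a, ha, by rw [Zsqrtd.norm_mul, hi, hα, one_mul], ?_, ?_, ?_⟩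
      · simpa using him.mul_left _
      · simpa using hre
      · intro x y hy h
        obtain ⟨ε, hε, n, h1, h2⟩ := hsol' x y hy h
        refine ⟨ε * star ⟨0, 1⟩ ^ n, ?_, n, ?_, h2⟩
        · rw [Zsqrtd.norm_mul, hε, Zsqrtd.norm_pow, Zsqrtd.norm_conj, hi, one_pow, one_mul]
        · have h3 : star (⟨0, 1⟩ : ℤ√(-(d : ℤ))) * ⟨0, 1⟩ = 1 := by
            rw [mul_comm, ← Zsqrtd.norm_eq_mul_conj, hi, Int.cast_one]
          rw [← h1, mul_pow, mul_assoc, ← mul_assoc (star _ ^ n), ← mul_pow, h3, one_pow, one_mul]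
    · exfalso
      obtain ⟨x, y, hy, h⟩ := hex
      obtain ⟨ε, hε, n, h1, -⟩ := hsol' x y hy h
      have h2 := (Zsqrtd.odd_re_even_im_pow hre him n).1
      have h3 : Odd (ε * α ^ n).re := by
        rcases Zsqrtd.eq_of_norm_eq_one (by exact_mod_cast hd) hε with (h4 | h4) | ⟨h4, -⟩
        · rw [h4, one_mul]; exact h2
        · rw [h4, neg_one_mul, Zsqrtd.re_neg]; exact h2.neg
        · exact absurd h4 hd1
      rw [h1] at h3
      exact Int.not_even_iff_odd.2 h3 (even_two_mul _)

theorem odd_and_re_pow_eq {d : ℤ} {q : ℕ} (hd : 0 < d) (hdodd : Odd d) (hqodd : Odd q)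
    {α ε : ℤ√(-d)} (hre : Even α.re) (him : Odd α.im) (hε : ε.norm = 1) {n : ℕ}
    (h : (ε * α ^ n).re = 2 * q) :
    Odd n ∧ ((α ^ n).re = 2 * q ∨ (α ^ n).re = -(2 * q)) := by
  have hqZ : Odd (q : ℤ) := by exact_mod_cast hqodd
  have hunit := Zsqrtd.eq_of_norm_eq_one hd hε
  have hpm : ε = 1 ∨ ε = -1 → ((α ^ n).re = 2 * q ∨ (α ^ n).re = -(2 * q)) := by
    rintro (h1 | h1)
    · left; rwa [h1, one_mul] at h
    · right
      rw [h1, neg_one_mul, Zsqrtd.re_neg] at h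
      linarith
  have hi : d = 1 ∧ ε.re = 0 ∧ (ε.im = 1 ∨ ε.im = -1) →
      (α ^ n).im = 2 * q ∨ (α ^ n).im = -(2 * q) := by
    rintro ⟨h1, h2, h3⟩
    rw [Zsqrtd.re_mul, h2] at h
    rcases h3 with h3 | h3 <;> rw [h3] at h
    · right; linear_combination -h - (α ^ n).im * h1
    · left; linear_combination h - (α ^ n).im * h1
  rcases Nat.even_or_odd n with hn | hn
  · exfalso
    obtain ⟨k, rfl⟩ := hn.two_dvd
    have h1 := (Zsqrtd.even_re_odd_im_pow hdodd.neg hre him k).1.1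
    rcases hunit with h2 | h2
    · rcases hpm h2 with h3 | h3 <;> rw [h3] at h1
      · exact Int.not_even_iff_odd.2 h1 (even_two_mul _)
      · exact Int.not_even_iff_odd.2 h1 (even_two_mul _).neg
    · have h4 : (α ^ (2 * k)).im = 2 * ((α ^ k).re * (α ^ k).im) := by
        rw [mul_comm 2 k, pow_mul, pow_two, Zsqrtd.im_mul]; ring
      have h5 : Even ((α ^ k).re * (α ^ k).im) := by
        rcases Nat.even_or_odd' k with ⟨l, rfl | rfl⟩
        · exact (Zsqrtd.even_re_odd_im_pow hdodd.neg hre him l).1.2.mul_left _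
        · exact (Zsqrtd.even_re_odd_im_pow hdodd.neg hre him l).2.1.mul_right _
      rcases hi h2 with h3 | h3
      · have h6 : (α ^ k).re * (α ^ k).im = q := by linarith
        exact Int.not_even_iff_odd.2 hqZ (h6 ▸ h5)
      · have h6 : (α ^ k).re * (α ^ k).im = -q := by linarith
        exact Int.not_even_iff_odd.2 hqZ.neg (h6 ▸ h5)
  · refine ⟨hn, ?_⟩
    rcases hunit with h2 | h2
    · exact hpm h2
    · exfalso
      obtain ⟨k, rfl⟩ := hn
      have h1 := (Zsqrtd.even_re_odd_im_pow hdodd.neg hre him k).2.2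
      rcases hi h2 with h3 | h3 <;> rw [h3] at h1
      · exact Int.not_even_iff_odd.2 h1 (even_two_mul _)
      · exact Int.not_even_iff_odd.2 h1 (even_two_mul _).neg

theorem eq_one_of_re_pow_dvd {d : ℤ} {p q c : ℕ} (hd : 0 < d) (hdodd : Odd d) (hp : p.Prime)
    (hpodd : Odd p) (hq : q.Prime) (hqodd : Odd q) (hpq : p ≠ q) {γ : ℤ√(-d)}
    (hγ : γ.norm = (p : ℤ) ^ c) (hre : γ.re = 2 * q) (him : Odd γ.im) {t : ℕ} (ht : Odd t)
    (h : (γ ^ t).re ∣ 2 * q) : t = 1 := by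
  obtain ⟨r, m⟩ := γ
  simp only at hre him
  subst hre
  have hB : 0 < d * m ^ 2 := by
    have : m ≠ 0 := by rintro rfl; exact absurd him (by decide)
    positivity
  obtain ⟨B, hBeq⟩ := Int.eq_ofNat_of_zero_le hB.le
  rw [hBeq] at hB
  have hBodd : Odd B := by
    have : Odd (d * m ^ 2) := hdodd.mul him.pow
    rw [hBeq] at this
    exact_mod_cast this
  rw [Zsqrtd.pow_eq_rescale (B := -(B : ℤ)) (by rw [← hBeq]; ring)] at h
  refine eq_one_of_re_pow_eq hp hpodd hq hqodd hpq (by exact_mod_cast hB) hBodd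
    (z := c) ?_ ht h
  have : 4 * (q : ℤ) ^ 2 + B = (p : ℤ) ^ c := by
    rw [← hγ, Zsqrtd.norm_def, ← hBeq]; ring
  exact_mod_cast this

theorem exponent_unique {d : ℤ} {p q a : ℕ} (hd : 0 < d) (hdodd : Odd d) (hp : p.Prime)
    (hpodd : Odd p) (hq : q.Prime) (hqodd : Odd q) (hpq : p ≠ q) {α : ℤ√(-d)}
    (hα : α.norm = (p : ℤ) ^ a) (hre : Even α.re) (him : Odd α.im) {m n : ℕ} (hm : Odd m)
    (hn : Odd n) (h1 : (α ^ m).re = 2 * q ∨ (α ^ m).re = -(2 * q))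
    (h2 : (α ^ n).re = 2 * q ∨ (α ^ n).re = -(2 * q)) : m = n := by
  have hqZ : Odd (q : ℤ) := by exact_mod_cast hqodd
  have hqP : Prime (q : ℤ) := Nat.prime_iff_prime_int.1 hq
  have hq2 : ¬ (q : ℤ) ∣ 2 := by
    intro h
    have h' : q ∣ 2 := by exact_mod_cast h
    have := (Nat.prime_dvd_prime_iff_eq hq Nat.prime_two).1 h'
    subst this
    revert hqodd; decide
  have hcop : IsCoprime (q : ℤ) α.norm := by
    rw [hα]
    apply IsCoprime.pow_right
    exact ((Nat.coprime_primes hq hp).2 hpq.symm).isCoprime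
  have hdvd : ∀ {k : ℕ}, (α ^ k).re = 2 * q ∨ (α ^ k).re = -(2 * q) → (q : ℤ) ∣ (α ^ k).re := by
    rintro k (h | h) <;> rw [h]
    · exact dvd_mul_left _ _
    · exact (dvd_mul_left _ _).neg_right
  have hg : Odd (m.gcd n) := Odd.of_dvd_nat hm (Nat.gcd_dvd_left m n)
  have hgq := Zsqrtd.dvd_re_pow_gcd hqP hq2 hcop hm hn (hdvd h1) (hdvd h2)
  have hgpar : Even (α ^ m.gcd n).re ∧ Odd (α ^ m.gcd n).im := by
    obtain ⟨k, hk⟩ := hg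
    rw [hk]
    exact (Zsqrtd.even_re_odd_im_pow hdodd.neg hre him k).2
  have h2q : 2 * (q : ℤ) ∣ (α ^ m.gcd n).re := (two_mul_dvd_iff_of_odd hqZ).2 ⟨hgpar.1, hgq⟩
  have key : ∀ {k : ℕ}, Odd k → m.gcd n ∣ k →
      ((α ^ k).re = 2 * q ∨ (α ^ k).re = -(2 * q)) → k = m.gcd n := by
    rintro k hk ⟨t, rfl⟩ h
    have ht : Odd t := Odd.of_dvd_nat hk (dvd_mul_left _ _)
    have h3 : (α ^ (m.gcd n * t)).re ∣ 2 * (q : ℤ) := by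
      rcases h with h | h <;> rw [h]
      exact (dvd_refl _).neg_left
    have h4 : (α ^ m.gcd n).re ∣ 2 * (q : ℤ) := by
      refine (Zsqrtd.re_dvd_re_pow _ ht).trans ?_
      rw [← pow_mul]
      exact h3
    have hnorm : (α ^ m.gcd n).norm = (p : ℤ) ^ (a * m.gcd n) := by
      rw [Zsqrtd.norm_pow, hα, pow_mul]
    rw [pow_mul] at h3
    suffices t = 1 by rw [this, mul_one]
    rcases Int.associated_iff.1 (associated_of_dvd_dvd h4 h2q) with h5 | h5
    · exact eq_one_of_re_pow_dvd hd hdodd hp hpodd hq hqodd hpq hnorm h5 hgpar.2 ht h3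
    · refine eq_one_of_re_pow_dvd hd hdodd hp hpodd hq hqodd hpq (γ := -α ^ m.gcd n)
        (by rw [Zsqrtd.norm_neg, hnorm]) (by rw [Zsqrtd.re_neg, h5, neg_neg])
        (by rw [Zsqrtd.im_neg]; exact hgpar.2.neg) ht ?_
      rw [ht.neg_pow, Zsqrtd.re_neg]
      exact h3.neg_left
  rw [key hm (Nat.gcd_dvd_left m n) h1, ← key hn (Nat.gcd_dvd_right m n) h2]

/-- Let `p` and `q6` be distinct odd prime numbers and let `d1` be a positive odd integer.
Then there is at most one pair of positive integers `(x, y)` satisfying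
`d1·x^2 + 4·q6^2 = p^y`. -/
theorem stmt_17 (p q6 : ℕ) (hp : p.Prime) (hq6 : q6.Prime) (hpodd : Odd p) (hqodd : Odd q6)
    (hne : p ≠ q6) (d1 : ℕ) (hd1 : 0 < d1) (hodd : Odd d1) :
    {xy : ℕ × ℕ | 0 < xy.1 ∧ 0 < xy.2 ∧ d1 * xy.1 ^ 2 + 4 * q6 ^ 2 = p ^ xy.2}.Subsingleton := by
  rintro ⟨x₁, y₁⟩ ⟨-, hy₁, h₁⟩ ⟨x₂, y₂⟩ ⟨-, hy₂, h₂⟩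
  simp only at hy₁ h₁ hy₂ h₂
  have hy : y₁ = y₂ := by
    obtain ⟨α, a, -, hα, hre, him, hsol⟩ :=
      exists_even_generator hd1 hodd hp hpodd hq6 hne ⟨x₁, y₁, hy₁, h₁⟩
    obtain ⟨ε₁, hε₁, n₁, hn₁, rfl⟩ := hsol x₁ y₁ hy₁ h₁
    obtain ⟨ε₂, hε₂, n₂, hn₂, rfl⟩ := hsol x₂ y₂ hy₂ h₂
    have hdZ : (0 : ℤ) < d1 := by exact_mod_cast hd1
    have hdodd : Odd (d1 : ℤ) := by exact_mod_cast hodd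
    obtain ⟨hm, hm'⟩ := odd_and_re_pow_eq hdZ hdodd hqodd hre him hε₁ hn₁
    obtain ⟨hn, hn'⟩ := odd_and_re_pow_eq hdZ hdodd hqodd hre him hε₂ hn₂
    rw [exponent_unique hdZ hdodd hp hpodd hq6 hqodd hne hα hre him hm hn hm' hn']
  subst hy
  have hx : d1 * x₁ ^ 2 = d1 * x₂ ^ 2 := by omega
  have hx' : x₁ = x₂ :=
    Nat.pow_left_injective two_ne_zero (Nat.eq_of_mul_eq_mul_left hd1 hx)
  rw [hx']
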